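/- arXiv:1403.6539 — 2 statements merged into one kernel-verified Lean document; each statement's English description precedes it below -/
import Mathlib

section
/- The global dimension of the down-up algebra A(α,β,φ) over K[t₁,…,tₙ] equals n+3, for all α, β ∈ K and φ ∈ K[t₁,…,tₙ]. -/
open MvPolynomial

namespace DownUp

inductive Gen | u | d

variable {K : Type} [Field K] {n : ℕ}

/-- Free algebra over the polynomial base ring on generators u, d. -/
abbrev F (K : Type) [Field K] (n : ℕ) := FreeAlgebra (MvPolynomial (Fin n) K) Gen

noncomputable def uF : F K n := FreeAlgebra.ι _ Gen.u
noncomputable def dF : F K n := FreeAlgebra.ι _ Gen.d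

/-- The defining relations of the down-up algebra over K[t₁,…,tₙ]. -/
inductive Rel (α β : K) (φ : MvPolynomial (Fin n) K) : F K n → F K n → Prop
  | ddu : Rel α β φ (dF * dF * uF)
      (α • (dF * uF * dF) + β • (uF * dF * dF) + algebraMap _ _ φ * dF)
  | duu : Rel α β φ (dF * uF * uF)
      (α • (uF * dF * uF) + β • (uF * uF * dF) + uF * algebraMap _ _ φ)

/-- The down-up algebra A(α,β,φ) over K[t₁,…,tₙ]. -/
abbrev A (α β : K) (φ : MvPolynomial (Fin n) K) := RingQuot (Rel α β φ)

noncomputable def U (α β : K) (φ : MvPolynomial (Fin n) K) : A α β φ :=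
  RingQuot.mkAlgHom K _ uF
noncomputable def D (α β : K) (φ : MvPolynomial (Fin n) K) : A α β φ :=
  RingQuot.mkAlgHom K _ dF

/-- Image of the base polynomial ring in A. -/
noncomputable def T (α β : K) (φ : MvPolynomial (Fin n) K) :
    MvPolynomial (Fin n) K →ₐ[K] A α β φ :=
  (RingQuot.mkAlgHom K (Rel α β φ)).comp (IsScalarTower.toAlgHom K (MvPolynomial (Fin n) K) (F K n))

end DownUp
open CategoryTheory in
/-- The (left) global dimension of a ring, as the supremum of the set of
degrees in which some Ext group of left modules is nonvanishing. -/
noncomputable def globalDim (A' : Type) [Ring A'] : ℕ∞ :=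
  sSup {m : ℕ∞ | ∃ k : ℕ, m = (k : ℕ∞) ∧ ∃ M N : ModuleCat.{0} A',
    Nontrivial (((_root_.Ext ℤ (ModuleCat.{0} A') k).obj (Opposite.op M)).obj N)}


namespace DownUpAux

open Submodule

section Alg

variable {R : Type} [CommRing R] {A : Type} [Ring A] [Algebra R A]

/-- The normal word `u^i (du)^j d^k`. -/
def nw (u d : A) (x : ℕ × ℕ × ℕ) : A := u ^ x.1 * (d * u) ^ x.2.1 * d ^ x.2.2

/-- The data of a PBW basis for a down-up algebra over `R`. -/
structure PBW (R : Type) [CommRing R] (A : Type) [Ring A] [Algebra R A] where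
  u : A
  d : A
  α : R
  β : R
  φ : R
  ddu : d * d * u = α • (d * u * d) + β • (u * d * d) + φ • d
  duu : d * u * u = α • (u * d * u) + β • (u * u * d) + φ • u
  B : Module.Basis (ℕ × ℕ × ℕ) R A
  hB : ∀ x, B x = nw u d x

/-- double filtration by number of `u` and by length -/
def SS (R : Type) [CommRing R] {A : Type} [Ring A] [Algebra R A] (u d : A) (N n : ℕ) :
    Submodule R A :=
  span R (nw u d '' {x | x.1 + x.2.1 ≤ N ∧ x.1 + 2 * x.2.1 + x.2.2 ≤ n})

/-- length filtration, integer indexed -/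
def LL (R : Type) [CommRing R] {A : Type} [Ring A] [Algebra R A] (u d : A) (n : ℤ) :
    Submodule R A :=
  span R (nw u d '' {x | (x.1 + 2 * x.2.1 + x.2.2 : ℤ) ≤ n})

lemma SS_mono (u d : A) {N N' n n' : ℕ} (h : N ≤ N') (h' : n ≤ n') :
    SS R u d N n ≤ SS R u d N' n' := by
  apply span_mono
  apply Set.image_mono
  rintro x ⟨h1, h2⟩
  exact ⟨h1.trans h, h2.trans h'⟩

lemma LL_mono (u d : A) {n n' : ℤ} (h' : n ≤ n') :
    LL R u d n ≤ LL R u d n' := by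
  apply span_mono
  apply Set.image_mono
  intro x h2
  exact le_trans h2 h'

lemma nw_mem_SS (u d : A) {N n : ℕ} (i j k : ℕ) (h : i + j ≤ N) (h' : i + 2 * j + k ≤ n) :
    nw u d (i, j, k) ∈ SS R u d N n :=
  subset_span ⟨(i, j, k), ⟨h, h'⟩, rfl⟩

lemma nw_mem_LL (u d : A) {n : ℤ} (i j k : ℕ) (h' : (i + 2 * j + k : ℤ) ≤ n) :
    nw u d (i, j, k) ∈ LL R u d n :=
  subset_span ⟨(i, j, k), h', rfl⟩

/-- induction principle: a linear map sends `SS` in a submodule if it does on words. -/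
lemma SS_ind (u d : A) {N n : ℕ} {X : Type} [AddCommGroup X] [Module R X] (f : A →ₗ[R] X)
    (S : Submodule R X)
    (h : ∀ i j k, i + j ≤ N → i + 2 * j + k ≤ n → f (nw u d (i, j, k)) ∈ S)
    {a : A} (ha : a ∈ SS R u d N n) : f a ∈ S := by
  have : SS R u d N n ≤ S.comap f := by
    apply span_le.2
    rintro _ ⟨⟨i, j, k⟩, ⟨h1, h2⟩, rfl⟩
    exact h i j k h1 h2
  exact this ha

lemma LL_ind (u d : A) {n : ℤ} {X : Type} [AddCommGroup X] [Module R X] (f : A →ₗ[R] X)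
    (S : Submodule R X)
    (h : ∀ i j k : ℕ, (i + 2 * j + k : ℤ) ≤ n → f (nw u d (i, j, k)) ∈ S)
    {a : A} (ha : a ∈ LL R u d n) : f a ∈ S := by
  have : LL R u d n ≤ S.comap f := by
    apply span_le.2
    rintro _ ⟨⟨i, j, k⟩, h2, rfl⟩
    exact h i j k h2
  exact this ha

lemma u_mul_nw (u d : A) (i j k : ℕ) : u * nw u d (i, j, k) = nw u d (i + 1, j, k) := by
  simp [nw, pow_succ', mul_assoc]

lemma u_mul_SS (u d : A) {N n : ℕ} {a : A} (ha : a ∈ SS R u d N n) :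
    u * a ∈ SS R u d (N + 1) (n + 1) := by
  refine SS_ind u d (LinearMap.mulLeft R u) _ (fun i j k h1 h2 => ?_) ha
  rw [LinearMap.mulLeft_apply, u_mul_nw]
  exact nw_mem_SS u d _ _ _ (by omega) (by omega)

lemma d_mul_SS (u d : A) (α β φ : R)
    (ddu : d * d * u = α • (d * u * d) + β • (u * d * d) + φ • d)
    (duu : d * u * u = α • (u * d * u) + β • (u * u * d) + φ • u) (N : ℕ) :
    (∀ n, ∀ a ∈ SS R u d N n, d * a ∈ SS R u d N (n + 1)) ∧
    (∀ n, ∀ a ∈ SS R u d N n, d * u * a ∈ SS R u d (N + 1) (n + 2)) := by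
  induction N with
  | zero =>
    constructor
    · intro n a ha
      refine SS_ind u d (LinearMap.mulLeft R d) _ (fun i j k h1 h2 => ?_) ha
      obtain rfl : i = 0 := by omega
      obtain rfl : j = 0 := by omega
      have : d * nw u d (0, 0, k) = nw u d (0, 0, k + 1) := by simp [nw, pow_succ']
      rw [LinearMap.mulLeft_apply, this]
      exact nw_mem_SS u d _ _ _ (by omega) (by omega)
    · intro n a ha
      refine SS_ind u d (LinearMap.mulLeft R (d * u)) _ (fun i j k h1 h2 => ?_) ha
      obtain rfl : i = 0 := by omega
      obtain rfl : j = 0 := by omega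
      have : d * u * nw u d (0, 0, k) = nw u d (0, 1, k) := by simp [nw]
      rw [LinearMap.mulLeft_apply, this]
      exact nw_mem_SS u d _ _ _ (by omega) (by omega)
  | succ N ih =>
    obtain ⟨ih1, ih2⟩ := ih
    constructor
    · intro n a ha
      refine SS_ind u d (LinearMap.mulLeft R d) _ (fun i j k h1 h2 => ?_) ha
      rw [LinearMap.mulLeft_apply]
      rcases i with _ | i
      · rcases j with _ | j
        · have : d * nw u d (0, 0, k) = nw u d (0, 0, k + 1) := by simp [nw, pow_succ']
          rw [this]
          exact nw_mem_SS u d _ _ _ (by omega) (by omega)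
        · obtain ⟨n, rfl⟩ : ∃ n', n = n' + 2 := ⟨n - 2, by omega⟩
          have hm : nw u d (0, j, k) ∈ SS R u d N n := nw_mem_SS u d _ _ _ (by omega) (by omega)
          have hd := ih1 _ _ hm
          have : d * nw u d (0, j + 1, k) = α • (d * u * (d * nw u d (0, j, k))) +
              β • (u * (d * (d * nw u d (0, j, k)))) + φ • (d * nw u d (0, j, k)) := by
            have h0 : d * nw u d (0, j + 1, k) = (d * d * u) * nw u d (0, j, k) := by
              simp [nw, pow_succ', mul_assoc]
            rw [h0, ddu]
            simp [add_mul, mul_assoc]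
          rw [this]
          refine add_mem (add_mem (smul_mem _ _ ?_) (smul_mem _ _ ?_)) (smul_mem _ _ ?_)
          · exact ih2 _ _ hd
          · exact u_mul_SS u d (ih1 _ _ hd)
          · exact SS_mono u d (by omega) (by omega) hd
      · rw [← u_mul_nw, ← mul_assoc]
        obtain ⟨n, rfl⟩ : ∃ n', n = n' + 1 := ⟨n - 1, by omega⟩
        exact ih2 _ _ (nw_mem_SS u d _ _ _ (by omega) (by omega))
    · intro n a ha
      refine SS_ind u d (LinearMap.mulLeft R (d * u)) _ (fun i j k h1 h2 => ?_) ha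
      rw [LinearMap.mulLeft_apply]
      rcases i with _ | i
      · have : d * u * nw u d (0, j, k) = nw u d (0, j + 1, k) := by
          simp [nw, pow_succ', mul_assoc]
        rw [this]
        exact nw_mem_SS u d _ _ _ (by omega) (by omega)
      · obtain ⟨n, rfl⟩ : ∃ n', n = n' + 1 := ⟨n - 1, by omega⟩
        have hm : nw u d (i, j, k) ∈ SS R u d N n := nw_mem_SS u d _ _ _ (by omega) (by omega)
        have : d * u * nw u d (i + 1, j, k) = α • (u * (d * u * nw u d (i, j, k))) +
            β • (u * (u * (d * nw u d (i, j, k)))) + φ • (u * nw u d (i, j, k)) := by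
          rw [← u_mul_nw, ← mul_assoc, duu]
          simp [add_mul, mul_assoc]
        rw [this]
        refine add_mem (add_mem (smul_mem _ _ ?_) (smul_mem _ _ ?_)) (smul_mem _ _ ?_)
        · exact u_mul_SS u d (ih2 _ _ hm)
        · exact u_mul_SS u d (u_mul_SS u d (ih1 _ _ hm))
        · exact SS_mono u d (by omega) (by omega) (u_mul_SS u d hm)

lemma u_mul_LL (u d : A) {n : ℤ} {a : A} (ha : a ∈ LL R u d n) :
    u * a ∈ LL R u d (n + 1) := by
  refine LL_ind u d (LinearMap.mulLeft R u) _ (fun i j k h2 => ?_) ha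
  rw [LinearMap.mulLeft_apply, u_mul_nw]
  exact nw_mem_LL u d _ _ _ (by push_cast; omega)

lemma SS_le_LL (u d : A) {N n : ℕ} {m : ℤ} (h : (n : ℤ) ≤ m) : SS R u d N n ≤ LL R u d m := by
  apply span_mono
  apply Set.image_mono
  rintro x ⟨_, h2⟩
  simp only [Set.mem_ofPred_eq] at *
  omega

lemma d_mul_LL (u d : A) (α β φ : R)
    (ddu : d * d * u = α • (d * u * d) + β • (u * d * d) + φ • d)
    (duu : d * u * u = α • (u * d * u) + β • (u * u * d) + φ • u) {n : ℤ} {a : A}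
    (ha : a ∈ LL R u d n) : d * a ∈ LL R u d (n + 1) := by
  refine LL_ind u d (LinearMap.mulLeft R d) _ (fun i j k h2 => ?_) ha
  rw [LinearMap.mulLeft_apply]
  have := (d_mul_SS u d α β φ ddu duu (i + j)).1 (i + 2 * j + k) _
    (nw_mem_SS u d i j k le_rfl le_rfl)
  exact SS_le_LL u d (by push_cast; omega) this

lemma pow_mul_LL (u d x : A) (c : ℤ)
    (hx : ∀ n : ℤ, ∀ a ∈ LL R u d n, x * a ∈ LL R u d (n + c)) (k : ℕ) (n : ℤ) (a : A)
    (ha : a ∈ LL R u d n) : x ^ k * a ∈ LL R u d (n + c * k) := by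
  induction k with
  | zero => simpa using ha
  | succ k ih =>
    rw [pow_succ', mul_assoc]
    have := hx _ _ ih
    convert this using 1
    push_cast; ring_nf

lemma mul_LL (u d : A) (α β φ : R)
    (ddu : d * d * u = α • (d * u * d) + β • (u * d * d) + φ • d)
    (duu : d * u * u = α • (u * d * u) + β • (u * u * d) + φ • u) {n m : ℤ} {a b : A}
    (ha : a ∈ LL R u d n) (hb : b ∈ LL R u d m) : a * b ∈ LL R u d (n + m) := by
  refine LL_ind u d (LinearMap.mulRight R b) _ (fun i j k h2 => ?_) ha
  rw [LinearMap.mulRight_apply]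
  simp only [nw, mul_assoc]
  have h1 := pow_mul_LL u d d 1 (fun n a ha => d_mul_LL u d α β φ ddu duu ha) k _ _ hb
  have h2 := pow_mul_LL u d (d * u) 2 (fun n a ha => by
    have := d_mul_LL u d α β φ ddu duu (u_mul_LL u d ha)
    rw [mul_assoc]
    convert this using 1
    ring_nf) j _ _ h1
  have h3 := pow_mul_LL u d u 1 (fun n a ha => u_mul_LL u d ha) i _ _ h2
  refine LL_mono u d ?_ h3
  linarith

lemma span_nw_eq_top (u d : A) (α β φ : R)
    (ddu : d * d * u = α • (d * u * d) + β • (u * d * d) + φ • d)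
    (duu : d * u * u = α • (u * d * u) + β • (u * u * d) + φ • u)
    (hgen : Algebra.adjoin R ({u, d} : Set A) = ⊤) : span R (Set.range (nw u d)) = ⊤ := by
  have key : ∀ a : A, ∃ n : ℤ, a ∈ LL R u d n := by
    intro a
    have ha : a ∈ Algebra.adjoin R ({u, d} : Set A) := by rw [hgen]; trivial
    have h1 : (1 : A) ∈ LL R u d 0 := by
      have := nw_mem_LL (R := R) u d (n := 0) 0 0 0 (by simp)
      simpa [nw] using this
    induction ha using Algebra.adjoin_induction with
    | mem x hx =>
      rcases hx with rfl | rfl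
      · exact ⟨_, by simpa using u_mul_LL x d h1⟩
      · exact ⟨_, by simpa using d_mul_LL u x α β φ ddu duu h1⟩
    | algebraMap r =>
      refine ⟨0, ?_⟩
      rw [Algebra.algebraMap_eq_smul_one]
      exact smul_mem _ _ h1
    | add x y _ _ hx hy =>
      obtain ⟨n, hn⟩ := hx
      obtain ⟨m, hm⟩ := hy
      exact ⟨max n m, add_mem (LL_mono u d (le_max_left _ _) hn) (LL_mono u d (le_max_right _ _) hm)⟩
    | mul x y _ _ hx hy =>
      obtain ⟨n, hn⟩ := hx
      obtain ⟨m, hm⟩ := hy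
      exact ⟨n + m, mul_LL u d α β φ ddu duu hn hm⟩
  rw [eq_top_iff]
  rintro a -
  obtain ⟨n, hn⟩ := key a
  refine span_mono ?_ hn
  exact Set.image_subset_range _ _

end Alg

end DownUpAux


namespace DownUpAux

open Submodule

section Indep

variable {R : Type} [CommRing R] (α β φ : R)

/-- quadratic extension containing a root `r` of `r^2 = α r + β`. -/
abbrev RQ := QuadraticAlgebra R β α

/-- root `r` in polynomial ring -/
noncomputable def rr : Polynomial (RQ α β) := Polynomial.C QuadraticAlgebra.omega

lemma rr_sq : rr α β * rr α β = algebraMap R _ α * rr α β + algebraMap R _ β := by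
  have : (QuadraticAlgebra.omega : RQ α β) * QuadraticAlgebra.omega =
     algebraMap R _ α * QuadraticAlgebra.omega + algebraMap R _ β := by
    ext <;> simp
  rw [rr, ← Polynomial.C_mul, this]
  simp only [Polynomial.C_add, Polynomial.C_mul]
  rfl

/-- the endomorphism `σ`: `w ↦ s w + φ`, `s = α - r` -/
noncomputable def sg : Polynomial (RQ α β) →ₐ[RQ α β] Polynomial (RQ α β) :=
  Polynomial.aeval ((algebraMap R _ α - rr α β) * Polynomial.X + algebraMap R _ φ)

/-- `σ` as `R`-linear endomorphism -/
noncomputable def sgl : Polynomial (RQ α β) →ₗ[R] Polynomial (RQ α β) :=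
  (sg α β φ).toLinearMap.restrictScalars R

/-- weights -/
noncomputable def cc : ℕ → Polynomial (RQ α β)
  | 0 => 0
  | i + 1 => rr α β ^ i * Polynomial.X + sg α β φ (cc i)

lemma sg_alg (x : R) : sg α β φ (algebraMap R _ x) = algebraMap R _ x := by
  rw [IsScalarTower.algebraMap_apply R (RQ α β) (Polynomial (RQ α β))]
  exact (sg α β φ).commutes _

lemma sg_rr : sg α β φ (rr α β) = rr α β := (sg α β φ).commutes _

lemma sg_X : sg α β φ Polynomial.X =
    (algebraMap R _ α - rr α β) * Polynomial.X + algebraMap R _ φ := by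
  simp [sg]

lemma cc_succ (i : ℕ) : cc α β φ (i + 1) = rr α β ^ i * Polynomial.X + sg α β φ (cc α β φ i) := rfl

lemma cc_rec (i : ℕ) : cc α β φ (i + 2) = algebraMap R _ α * cc α β φ (i + 1) +
    algebraMap R _ β * cc α β φ i + algebraMap R _ φ := by
  induction i with
  | zero =>
    simp [cc, sg_X]
    ring
  | succ i ih =>
    have H3 := cc_succ α β φ (i + 2)
    have H2 := cc_succ α β φ (i + 1)
    have H1 := cc_succ α β φ i
    have ih' := congrArg (sg α β φ) ih
    rw [map_add, map_add, map_mul, map_mul, sg_alg, sg_alg, sg_alg] at ih'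
    linear_combination H3 + ih' - algebraMap R _ α * H2 - algebraMap R _ β * H1 +
      rr α β ^ i * Polynomial.X * rr_sq α β

/-- the representation space -/
abbrev PP := ℕ → ℕ → Polynomial (RQ α β)

/-- action of `u` -/
noncomputable def opU : PP α β →ₗ[R] PP α β where
  toFun f := fun i k => match i with
    | 0 => 0
    | i + 1 => f i k
  map_add' f g := by
    funext i k; cases i <;> simp
  map_smul' c f := by
    funext i k; cases i <;> simp

/-- action of `d` -/
noncomputable def opD : PP α β →ₗ[R] PP α β where
  toFun f := fun i k => (match k with
    | 0 => 0
    | k + 1 => rr α β ^ i * sgl α β φ (f i k)) + cc α β φ (i + 1) * f (i + 1) k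
  map_add' f g := by
    funext i k; cases k <;> simp <;> ring
  map_smul' c f := by
    funext i k; cases k <;> simp 

lemma opU_zero (f : PP α β) (k : ℕ) : opU α β f 0 k = 0 := rfl
lemma opU_succ (f : PP α β) (i k : ℕ) : opU α β f (i + 1) k = f i k := rfl
lemma opD_zero (f : PP α β) (i : ℕ) : opD α β φ f i 0 = cc α β φ (i + 1) * f (i + 1) 0 := by
  simp [opD]
lemma opD_succ (f : PP α β) (i k : ℕ) : opD α β φ f i (k + 1) =
    rr α β ^ i * sg α β φ (f i k) + cc α β φ (i + 1) * f (i + 1) (k + 1) := rfl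

lemma op_duu : opD α β φ * opU α β * opU α β = α • (opU α β * opD α β φ * opU α β) +
    β • (opU α β * opU α β * opD α β φ) + φ • opU α β := by
  ext f i k : 3
  simp only [Module.End.mul_apply, LinearMap.add_apply, LinearMap.smul_apply, Pi.add_apply,
    Pi.smul_apply]
  simp only [Algebra.smul_def]
  have h := rr_sq α β
  have c0 : cc α β φ 0 = 0 := rfl
  have c2 := cc_rec α β φ
  rcases i with _ | _ | i <;> rcases k with _ | k <;>
    simp only [opU_zero, opU_succ, opD_zero, opD_succ, map_zero, mul_zero, zero_add, c2, c0, add_zero]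
  · ring
  · ring
  · ring
  · linear_combination (rr α β ^ i * sg α β φ (f i k)) * h

lemma op_ddu : opD α β φ * opD α β φ * opU α β = α • (opD α β φ * opU α β * opD α β φ) +
    β • (opU α β * opD α β φ * opD α β φ) + φ • opD α β φ := by
  ext f i k : 3
  simp only [Module.End.mul_apply, LinearMap.add_apply, LinearMap.smul_apply, Pi.add_apply,
    Pi.smul_apply]
  simp only [Algebra.smul_def]
  have h := rr_sq α β
  have c0 : cc α β φ 0 = 0 := rfl
  have c2 := cc_rec α β φ
  have c1 : ∀ i, sg α β φ (cc α β φ i) = cc α β φ (i + 1) - rr α β ^ i * Polynomial.X := by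
    intro i; rw [cc_succ]; ring
  have c3 : cc α β φ 1 = Polynomial.X := by simp [cc]
  rcases i with _ | i <;> rcases k with _ | _ | k <;>
    simp only [opU_zero, opU_succ, opD_zero, opD_succ, map_zero, mul_zero, zero_add,
      add_zero, map_add, map_mul, map_pow, sg_rr, c1, pow_zero, one_mul] <;>
    simp only [c2, c0, mul_zero, add_zero]
  · ring
  · rw [c3]; ring
  · rw [c3]; ring
  · ring_nf
  · linear_combination (rr α β ^ i * (algebraMap R _ α * cc α β φ (i + 1) +
      algebraMap R _ β * cc α β φ i + algebraMap R _ φ - rr α β ^ (i + 1) * Polynomial.X) *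
      sg α β φ (f (i + 1) 0)) * h
  · linear_combination (rr α β ^ i * (algebraMap R _ α * cc α β φ (i + 1) +
      algebraMap R _ β * cc α β φ i + algebraMap R _ φ - rr α β ^ (i + 1) * Polynomial.X) *
      sg α β φ (f (i + 1) (k + 1)) + rr α β ^ i * rr α β ^ i * sg α β φ (sg α β φ (f i k))) * h

section
variable {A : Type} [Ring A] [Algebra R A]

/-- base vector -/
noncomputable def ee : PP α β := fun i k => if i = 0 ∧ k = 0 then 1 else 0

lemma opD_pow_ee (k : ℕ) (i' k' : ℕ) : (opD α β φ ^ k) (ee α β) i' k' =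
    if i' = 0 ∧ k' = k then 1 else 0 := by
  induction k generalizing i' k' with
  | zero => rfl
  | succ k ih =>
    rw [pow_succ', Module.End.mul_apply]
    cases k' with
    | zero => rw [opD_zero, ih]; simp
    | succ k' =>
      rw [opD_succ, ih, ih]
      by_cases h : i' = 0 <;> by_cases h2 : k' = k <;> simp [h, h2]

lemma opDU_pow (f : PP α β) (j k : ℕ) : ((opD α β φ * opU α β) ^ j) f 0 k =
    Polynomial.X ^ j * f 0 k := by
  induction j with
  | zero => simp
  | succ j ih =>
    rw [pow_succ', Module.End.mul_apply, Module.End.mul_apply]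
    have c1 : cc α β φ 1 = Polynomial.X := by simp [cc]
    cases k <;> simp [opD_zero, opD_succ, opU_zero, opU_succ, c1, ih] <;> ring

lemma opU_pow (f : PP α β) (i i' k : ℕ) : ((opU α β) ^ i) f i' k =
    if i ≤ i' then f (i' - i) k else 0 := by
  induction i generalizing i' with
  | zero => simp
  | succ i ih =>
    rw [pow_succ', Module.End.mul_apply]
    cases i' with
    | zero => simp [opU_zero]
    | succ i' => rw [opU_succ, ih]; simp

lemma nw_ee (i j k i' k' : ℕ) (h : i' ≤ i) : nw (opU α β) (opD α β φ) (i, j, k) (ee α β) i' k' =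
    if i' = i ∧ k' = k then Polynomial.X ^ j else 0 := by
  simp only [nw, Module.End.mul_apply]
  rw [opU_pow]
  by_cases h2 : i = i'
  · subst h2
    simp [opDU_pow, opD_pow_ee]
  · rw [if_neg (by omega), if_neg (by rintro ⟨rfl, -⟩; exact h2 rfl)]

lemma linIndep_nw_op : LinearIndependent R
    (fun x => (nw (A := Module.End R (PP α β)) (opU α β) (opD α β φ) x) (ee α β)) := by
  refine linearIndependent_iff.2 ?_
  intro l hl
  have key : ∀ (i j k : ℕ), l (i, j, k) = 0 := by
    intro i
    induction i using Nat.strong_induction_on with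
    | _ i ih =>
    intro j k
    have h1 := congrFun (congrFun hl i) k
    rw [Finsupp.linearCombination_apply, Finsupp.sum, Finset.sum_apply,
      Finset.sum_apply] at h1
    have h2 := congrArg (fun p => (Polynomial.coeff p j).re) h1
    simp only [LinearMap.smul_apply, Pi.smul_apply, Polynomial.finsetSum_coeff] at h2
    have h3 : ∀ x ∈ l.support, (l x • (nw (opU α β) (opD α β φ) x) (ee α β) i k).coeff j =
        if x = (i, j, k) then algebraMap R (RQ α β) (l x) else 0 := by
      rintro ⟨i', j', k'⟩ hx
      have : i ≤ i' := by
        by_contra hlt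
        exact Finsupp.mem_support_iff.1 hx (ih i' (by omega) j' k')
      rw [nw_ee _ _ _ _ _ _ _ _ this]
      by_cases hi : i = i' <;> by_cases hk : k = k' <;> by_cases hj : j = j'
      all_goals simp [hi, hk, hj, Polynomial.coeff_X_pow, Prod.ext_iff, Ne.symm, eq_comm]
      all_goals first
        | (simp [Algebra.smul_def]; done)
        | (intros; omega)
    rw [Finset.sum_congr rfl h3] at h2
    rw [Finset.sum_ite_eq'] at h2
    by_contra hne
    rw [if_pos (Finsupp.mem_support_iff.2 hne)] at h2
    apply hne
    simpa using h2
  ext ⟨i, j, k⟩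
  exact key i j k

/-- an algebra mapping to operators has independent words -/
lemma linIndep_nw (f : A →ₐ[R] Module.End R (PP α β)) (u d : A) (hu : f u = opU α β)
    (hd : f d = opD α β φ) : LinearIndependent R (nw u d) := by
  apply LinearIndependent.of_comp ((LinearMap.applyₗ (ee α β)).comp f.toLinearMap)
  have : (⇑((LinearMap.applyₗ (ee α β)).comp f.toLinearMap) ∘ nw u d) =
      (fun x => (nw (A := Module.End R (PP α β)) (opU α β) (opD α β φ) x) (ee α β)) := by
    funext x
    have h : f (nw u d x) = nw (A := Module.End R (PP α β)) (opU α β) (opD α β φ) x := by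
      rw [nw, map_mul, map_mul, map_pow, map_pow, map_pow, map_mul, hu, hd]; rfl
    simp only [Function.comp_apply, LinearMap.comp_apply, AlgHom.toLinearMap_apply, h]
    rfl
  rw [this]
  exact linIndep_nw_op α β φ

/-- Basis theorem -/
noncomputable def mkPBW (f : A →ₐ[R] Module.End R (PP α β)) (u d : A) (hu : f u = opU α β)
    (hd : f d = opD α β φ)
    (ddu : d * d * u = α • (d * u * d) + β • (u * d * d) + φ • d)
    (duu : d * u * u = α • (u * d * u) + β • (u * u * d) + φ • u)
    (hgen : Algebra.adjoin R {u, d} = ⊤) : PBW R A where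
  u := u
  d := d
  α := α
  β := β
  φ := φ
  ddu := ddu
  duu := duu
  B := Module.Basis.mk (linIndep_nw α β φ f u d hu hd)
    (span_nw_eq_top u d α β φ ddu duu hgen).ge
  hB x := by simp

end
end Indep

end DownUpAux


namespace DownUpAux

open Submodule TensorProduct

section Ops

variable {R : Type} [CommRing R] {A : Type} [Ring A] [Algebra R A] (H : PBW R A)

/-- right multiplication -/
noncomputable abbrev mr (R : Type) [CommRing R] {A : Type} [Ring A] [Algebra R A] (x : A) : A →ₗ[R] A :=
  LinearMap.mulRight R x

/-- `∂` -/
noncomputable def pd : A →ₗ[R] A := H.B.constr R fun x => match x with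
  | (i, j, k + 1) => nw H.u H.d (i, j, k)
  | (_, _, 0) => 0

/-- `σ_u` -/
noncomputable def su : A →ₗ[R] A := H.B.constr R fun x => match x with
  | (i + 1, 0, 0) => nw H.u H.d (i, 0, 0)
  | (i, j + 1, 0) => nw H.u H.d (i, j, 1)
  | _ => 0

/-- `τ₂` -/
noncomputable def t2 : A →ₗ[R] A := H.B.constr R fun x => match x with
  | (i, j + 1, 0) => nw H.u H.d (i, j, 0)
  | _ => 0

/-- `τ₁` -/
noncomputable def t1 : A →ₗ[R] A := pd H ∘ₗ pd H + H.α • (pd H ∘ₗ mr R H.u ∘ₗ t2 H)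

lemma t1_apply (a : A) : t1 H a = pd H (pd H a) + H.α • pd H (t2 H a * H.u) := rfl

lemma pd_nw_succ (i j k : ℕ) : pd H (nw H.u H.d (i, j, k + 1)) = nw H.u H.d (i, j, k) := by
  rw [pd, ← H.hB, Module.Basis.constr_basis]
lemma pd_nw_zero (i j : ℕ) : pd H (nw H.u H.d (i, j, 0)) = 0 := by
  rw [pd, ← H.hB, Module.Basis.constr_basis]
lemma su_nw_succ (i j k : ℕ) : su H (nw H.u H.d (i, j, k + 1)) = 0 := by
  rw [su, ← H.hB, Module.Basis.constr_basis]
  cases i <;> cases j <;> rfl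
lemma su_nw_zero (i j : ℕ) : su H (nw H.u H.d (i, j + 1, 0)) = nw H.u H.d (i, j, 1) := by
  rw [su, ← H.hB, Module.Basis.constr_basis]
  cases i <;> rfl
lemma su_nw_zero_zero (i : ℕ) : su H (nw H.u H.d (i + 1, 0, 0)) = nw H.u H.d (i, 0, 0) := by
  rw [su, ← H.hB, Module.Basis.constr_basis]
  cases i <;> rfl
lemma su_one : su H (nw H.u H.d (0, 0, 0)) = 0 := by
  rw [su, ← H.hB, Module.Basis.constr_basis]
lemma t2_nw_succ (i j k : ℕ) : t2 H (nw H.u H.d (i, j, k + 1)) = 0 := by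
  rw [t2, ← H.hB, Module.Basis.constr_basis]
  cases i <;> cases j <;> rfl
lemma t2_nw_zero (i j : ℕ) : t2 H (nw H.u H.d (i, j + 1, 0)) = nw H.u H.d (i, j, 0) := by
  rw [t2, ← H.hB, Module.Basis.constr_basis]
  cases i <;> rfl
lemma t2_nw_zero_zero (i : ℕ) : t2 H (nw H.u H.d (i, 0, 0)) = 0 := by
  rw [t2, ← H.hB, Module.Basis.constr_basis]

lemma nw_mul_d (u d : A) (i j k : ℕ) : nw u d (i, j, k) * d = nw u d (i, j, k + 1) := by
  simp [nw, pow_succ, mul_assoc]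
lemma nw_mul_du (u d : A) (i j : ℕ) : nw u d (i, j, 0) * d * u = nw u d (i, j + 1, 0) := by
  simp [nw, pow_succ, mul_assoc]
lemma nw_mul_u (u d : A) (i : ℕ) : nw u d (i, 0, 0) * u = nw u d (i + 1, 0, 0) := by
  simp [nw, pow_succ, mul_assoc]

include H in
lemma ext_nw {X : Type} [AddCommGroup X] [Module R X] {f g : A →ₗ[R] X}
    (h : ∀ x, f (nw H.u H.d x) = g (nw H.u H.d x)) : f = g :=
  H.B.ext fun x => by rw [H.hB, h]

include H in
lemma ext_two {X : Type} [AddCommGroup X] [Module R X] {f g : A →ₗ[R] X}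
    (h0 : ∀ i j, f (nw H.u H.d (i, j, 0)) = g (nw H.u H.d (i, j, 0)))
    (h1 : ∀ w, f (w * H.d) = g (w * H.d)) : f = g :=
  ext_nw H fun ⟨i, j, k⟩ => by
    cases k with
    | zero => exact h0 i j
    | succ k => rw [← nw_mul_d]; exact h1 _

include H in
lemma ext_three {X : Type} [AddCommGroup X] [Module R X] {f g : A →ₗ[R] X}
    (h0 : ∀ i, f (nw H.u H.d (i, 0, 0)) = g (nw H.u H.d (i, 0, 0)))
    (h1 : ∀ i j, f (nw H.u H.d (i, j, 0) * H.d * H.u) = g (nw H.u H.d (i, j, 0) * H.d * H.u))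
    (h2 : ∀ w, f (w * H.d) = g (w * H.d)) : f = g :=
  ext_two H (fun i j => by
    cases j with
    | zero => exact h0 i
    | succ j => rw [← nw_mul_du]; exact h1 _ _) h2

lemma pd_d (x : A) : pd H (x * H.d) = x := by
  have : pd H ∘ₗ mr R H.d = LinearMap.id := ext_nw H fun ⟨i, j, k⟩ => by
    simp [nw_mul_d, pd_nw_succ]
  exact DFunLike.congr_fun this x
lemma su_d (x : A) : su H (x * H.d) = 0 := by
  have : su H ∘ₗ mr R H.d = 0 := ext_nw H fun ⟨i, j, k⟩ => by
    simp [nw_mul_d, su_nw_succ]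
  exact DFunLike.congr_fun this x
lemma t2_d (x : A) : t2 H (x * H.d) = 0 := by
  have : t2 H ∘ₗ mr R H.d = 0 := ext_nw H fun ⟨i, j, k⟩ => by
    simp [nw_mul_d, t2_nw_succ]
  exact DFunLike.congr_fun this x
lemma t1_d (x : A) : t1 H (x * H.d) = pd H x := by
  simp [t1_apply, t2_d, pd_d]

lemma r_ddu (w : A) : w * H.d * H.d * H.u = H.α • (w * H.d * H.u * H.d) +
    H.β • (w * H.u * H.d * H.d) + H.φ • (w * H.d) := by
  have := congrArg (w * ·) H.ddu
  simpa [mul_add, mul_assoc] using this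
lemma r_duu (w : A) : w * H.d * H.u * H.u = H.α • (w * H.u * H.d * H.u) +
    H.β • (w * H.u * H.u * H.d) + H.φ • (w * H.u) := by
  have := congrArg (w * ·) H.duu
  simpa [mul_add, mul_assoc] using this

lemma su_du (y : A) : su H (y * H.d * H.u) + pd H y * H.d * H.d = y * H.d := by
  have : su H ∘ₗ mr R H.u ∘ₗ mr R H.d + mr R H.d ∘ₗ mr R H.d ∘ₗ pd H = mr R H.d := by
    apply ext_two H
    · intro i j
      simp [nw_mul_du, su_nw_zero, pd_nw_zero]
      rw [nw_mul_d]
    · intro w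
      simp [r_ddu, su_d, pd_d]
  exact DFunLike.congr_fun this y

lemma pd_du (y : A) : pd H (y * H.d * H.u) = H.α • (pd H y * H.d * H.u) +
    H.β • (pd H y * H.u * H.d) + H.φ • pd H y := by
  have : pd H ∘ₗ mr R H.u ∘ₗ mr R H.d = H.α • (mr R H.u ∘ₗ mr R H.d ∘ₗ pd H) +
      H.β • (mr R H.d ∘ₗ mr R H.u ∘ₗ pd H) + H.φ • pd H := by
    apply ext_two H
    · intro i j
      simp [nw_mul_du, pd_nw_zero]
    · intro w
      simp [r_ddu, pd_d]
  exact DFunLike.congr_fun this y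

lemma t2_du (y : A) : t2 H (y * H.d * H.u) + pd H y * H.d = y := by
  have : t2 H ∘ₗ mr R H.u ∘ₗ mr R H.d + mr R H.d ∘ₗ pd H = LinearMap.id := by
    apply ext_two H
    · intro i j
      simp [nw_mul_du, pd_nw_zero, t2_nw_zero]
    · intro w
      simp [r_ddu, pd_d, t2_d]
  exact DFunLike.congr_fun this y

lemma t1_du (a : A) : t1 H (a * H.d * H.u) = H.α • pd H (a * H.u) + H.β • (pd H a * H.u) +
    H.φ • pd H (pd H a) := by
  have h := t2_du H a
  have h2 : t2 H (a * H.d * H.u) = a - pd H a * H.d := eq_sub_of_add_eq h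
  rw [t1_apply, h2, pd_du, sub_mul]
  simp only [map_add, map_sub, map_smul, pd_d]
  module

lemma I1 (a : A) : su H (a * H.u) + t1 H a * H.d * H.d + t2 H a * H.d * H.u
    - H.α • (t2 H a * H.u * H.d) - a = H.φ • su H (t2 H a * H.u) := by
  have : su H ∘ₗ mr R H.u + mr R H.d ∘ₗ mr R H.d ∘ₗ t1 H + mr R H.u ∘ₗ mr R H.d ∘ₗ t2 H
    - H.α • (mr R H.d ∘ₗ mr R H.u ∘ₗ t2 H) - LinearMap.id = H.φ • (su H ∘ₗ mr R H.u ∘ₗ t2 H) := by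
    apply ext_three H
    · intro i
      simp [nw_mul_u, su_nw_zero_zero, t1_apply, pd_nw_zero, t2_nw_zero_zero]
    · intro i j
      have h := su_du H (nw H.u H.d (i, j, 0) * H.u)
      have h2 : t2 H (nw H.u H.d (i, j, 0) * H.d * H.u) = nw H.u H.d (i, j, 0) := by
        rw [nw_mul_du, t2_nw_zero]
      have h3 : pd H (nw H.u H.d (i, j, 0) * H.d * H.u) = 0 := by
        rw [nw_mul_du, pd_nw_zero]
      simp only [LinearMap.sub_apply, LinearMap.add_apply, LinearMap.comp_apply, LinearMap.smul_apply,
        LinearMap.mulRight_apply, LinearMap.id_apply, t1_apply, h2, h3, map_zero, zero_add]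
      rw [r_duu]
      simp only [map_add, map_smul, su_d, smul_zero, smul_mul_assoc]
      rw [eq_sub_of_add_eq h]
      module
    · intro w
      have h := su_du H w
      simp [t2_d, t1_d, su_d, h]
  exact DFunLike.congr_fun this a

lemma I2 (a : A) : pd H (a * H.u) - H.α • (t1 H a * H.d * H.u) - H.β • (t1 H a * H.u * H.d)
    - H.β • (t2 H a * H.u * H.u) = H.φ • (t1 H a + pd H (t2 H a * H.u)) := by
  have : pd H ∘ₗ mr R H.u - H.α • (mr R H.u ∘ₗ mr R H.d ∘ₗ t1 H) -
     H.β • (mr R H.d ∘ₗ mr R H.u ∘ₗ t1 H) - H.β • (mr R H.u ∘ₗ mr R H.u ∘ₗ t2 H)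
      = H.φ • (t1 H + pd H ∘ₗ mr R H.u ∘ₗ t2 H) := by
    apply ext_three H
    · intro i
      simp [nw_mul_u, t1_apply, pd_nw_zero, t2_nw_zero_zero]
    · intro i j
      have h := pd_du H (nw H.u H.d (i, j, 0) * H.u)
      have h2 : t2 H (nw H.u H.d (i, j, 0) * H.d * H.u) = nw H.u H.d (i, j, 0) := by
        rw [nw_mul_du, t2_nw_zero]
      have h3 : pd H (nw H.u H.d (i, j, 0) * H.d * H.u) = 0 := by
        rw [nw_mul_du, pd_nw_zero]
      simp only [LinearMap.sub_apply, LinearMap.add_apply, LinearMap.comp_apply, LinearMap.smul_apply,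
        LinearMap.mulRight_apply, LinearMap.id_apply, t1_apply, h2, h3, map_zero, zero_add]
      rw [r_duu]
      simp only [map_add, map_smul, pd_d, smul_zero, smul_mul_assoc, h]
      module
    · intro w
      have h := pd_du H w
      simp [t2_d, t1_d, h]
      abel
  exact DFunLike.congr_fun this a

/-- degree filtration -/
abbrev L (n : ℤ) : Submodule R A := LL R H.u H.d n

lemma L_mono {n n' : ℤ} (h : n ≤ n') {a : A} (ha : a ∈ L H n) : a ∈ L H n' := LL_mono _ _ h ha

lemma pd_L {n : ℤ} {a : A} (ha : a ∈ L H n) : pd H a ∈ L H (n - 1) := by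
  refine LL_ind H.u H.d (pd H) _ ?_ ha
  intro i j k h
  cases k with
  | zero => rw [pd_nw_zero]; exact zero_mem _
  | succ k => rw [pd_nw_succ]; apply nw_mem_LL; push_cast at h; linarith

lemma su_L {n : ℤ} {a : A} (ha : a ∈ L H n) : su H a ∈ L H (n - 1) := by
  refine LL_ind H.u H.d (su H) _ ?_ ha
  intro i j k h
  rcases k with _ | k
  · rcases j with _ | j
    · rcases i with _ | i
      · rw [su_one]; exact zero_mem _
      · rw [su_nw_zero_zero]; apply nw_mem_LL; push_cast at *; linarith
    · rw [su_nw_zero]; apply nw_mem_LL; push_cast at *; linarith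
  · rw [su_nw_succ]; exact zero_mem _

lemma t2_L {n : ℤ} {a : A} (ha : a ∈ L H n) : t2 H a ∈ L H (n - 2) := by
  refine LL_ind H.u H.d (t2 H) _ ?_ ha
  intro i j k h
  rcases k with _ | k
  · rcases j with _ | j
    · rw [t2_nw_zero_zero]; exact zero_mem _
    · rw [t2_nw_zero]; apply nw_mem_LL; push_cast at *; linarith
  · rw [t2_nw_succ]; exact zero_mem _

lemma mul_L {n m : ℤ} {a b : A} (ha : a ∈ L H n) (hb : b ∈ L H m) : a * b ∈ L H (n + m) :=
  mul_LL H.u H.d H.α H.β H.φ H.ddu H.duu ha hb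

lemma u_L : H.u ∈ L H 1 := by
  have := nw_mem_LL (R := R) H.u H.d (n := 1) 1 0 0 (by norm_num)
  simpa [nw] using this
lemma d_L : H.d ∈ L H 1 := by
  have := nw_mem_LL (R := R) H.u H.d (n := 1) 0 0 1 (by norm_num)
  simpa [nw] using this

lemma mul_u_L {n : ℤ} {a : A} (ha : a ∈ L H n) : a * H.u ∈ L H (n + 1) := mul_L H ha (u_L H)
lemma mul_d_L {n : ℤ} {a : A} (ha : a ∈ L H n) : a * H.d ∈ L H (n + 1) := mul_L H ha (d_L H)

lemma t1_L {n : ℤ} {a : A} (ha : a ∈ L H n) : t1 H a ∈ L H (n - 2) := by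
  rw [t1_apply]
  refine add_mem (L_mono H ?_ (pd_L H (pd_L H ha))) (smul_mem _ _
    (L_mono H ?_ (pd_L H (mul_u_L H (t2_L H ha)))))
  · linarith
  · linarith

end Ops

end DownUpAux


set_option linter.all false

namespace DownUpAux

open Submodule TensorProduct

section Cplx

variable {R : Type} [CommRing R] {A : Type} [Ring A] [Algebra R A] (H : PBW R A)
variable (M : Type) [AddCommGroup M] [Module R M] [Module A M] [IsScalarTower R A M]

/-- right multiplication on the left factor -/
noncomputable def rho (x : A) : A ⊗[R] M →ₗ[A] A ⊗[R] M :=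
  TensorProduct.AlgebraTensorModule.map (LinearMap.toSpanSingleton A A x) (LinearMap.id : M →ₗ[R] M)

/-- action on the right factor -/
noncomputable def lam (x : A) : A ⊗[R] M →ₗ[A] A ⊗[R] M :=
  TensorProduct.AlgebraTensorModule.map (LinearMap.id : A →ₗ[A] A) (Algebra.lsmul R R M x)

@[simp] lemma rho_tmul (x a : A) (m : M) : rho (R := R) M x (a ⊗ₜ m) = (a * x) ⊗ₜ m := by
  simp [rho]
@[simp] lemma lam_tmul (x a : A) (m : M) : lam (R := R) M x (a ⊗ₜ m) = a ⊗ₜ (x • m) := by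
  simp [lam]

/-- augmentation -/
noncomputable def dd0 : A ⊗[R] M →ₗ[A] M :=
  TensorProduct.AlgebraTensorModule.lift
    { toFun := fun a => (LinearMap.toSpanSingleton A (Module.End R M) (LinearMap.id)) a
      map_add' := by intros; simp [add_smul]
      map_smul' := by intros; simp [mul_smul] }

@[simp] lemma dd0_tmul (a : A) (m : M) : dd0 (R := R) M (a ⊗ₜ m) = a • m := by
  simp [dd0]

noncomputable def dd1 : (A ⊗[R] M) × (A ⊗[R] M) →ₗ[A] A ⊗[R] M :=
  (rho M H.u - lam M H.u).coprod (rho M H.d - lam M H.d)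

noncomputable def e11 : A ⊗[R] M →ₗ[A] A ⊗[R] M :=
  rho M (H.d * H.d) - H.α • (rho M H.d ∘ₗ lam M H.d) - H.β • lam M (H.d * H.d)
noncomputable def e12 : A ⊗[R] M →ₗ[A] A ⊗[R] M :=
  rho M H.d ∘ₗ lam M H.u + rho M (H.d * H.u) - H.α • (lam M (H.d * H.u) + rho M (H.u * H.d))
   - H.β • (lam M (H.u * H.d) + rho M H.u ∘ₗ lam M H.d) - H.φ • LinearMap.id
noncomputable def e21 : A ⊗[R] M →ₗ[A] A ⊗[R] M :=
  lam M (H.d * H.u) + rho M H.d ∘ₗ lam M H.u - H.α • (lam M (H.u * H.d) + rho M (H.d * H.u))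
   - H.β • (rho M H.u ∘ₗ lam M H.d + rho M (H.u * H.d)) - H.φ • LinearMap.id
noncomputable def e22 : A ⊗[R] M →ₗ[A] A ⊗[R] M :=
  lam M (H.u * H.u) - H.α • (rho M H.u ∘ₗ lam M H.u) - H.β • rho M (H.u * H.u)

noncomputable def dd2 : (A ⊗[R] M) × (A ⊗[R] M) →ₗ[A] (A ⊗[R] M) × (A ⊗[R] M) :=
  ((e11 H M).coprod (e12 H M)).prod ((e21 H M).coprod (e22 H M))

noncomputable def dd3 : (A ⊗[R] M) →ₗ[A] (A ⊗[R] M) × (A ⊗[R] M) :=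
  (- lam M H.u - H.β • rho M H.u).prod (rho M H.d + H.β • lam M H.d)

lemma ext_pair {X : Type} [AddCommGroup X] [Module A X] [Module R X] [IsScalarTower R A X]
   {f g : (A ⊗[R] M) →ₗ[A] X}
   (h : ∀ a m, f (a ⊗ₜ m) = g (a ⊗ₜ m)) : f = g := by
  apply TensorProduct.AlgebraTensorModule.ext h

lemma d0d1 : dd0 (R := R) M ∘ₗ dd1 H M = 0 := by
  apply LinearMap.prod_ext <;> apply ext_pair <;> intro a m <;> simp [dd1, mul_smul]

lemma m_ddu (m : M) : H.d • H.d • H.u • m = H.α • H.d • H.u • H.d • m + H.β • H.u • H.d • H.d • m +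
    H.φ • H.d • m := by
  have := congrArg (· • m) H.ddu
  simpa [add_smul, mul_smul] using this
lemma m_duu (m : M) : H.d • H.u • H.u • m = H.α • H.u • H.d • H.u • m + H.β • H.u • H.u • H.d • m +
    H.φ • H.u • m := by
  have := congrArg (· • m) H.duu
  simpa [add_smul, mul_smul] using this

lemma d1d2 : dd1 H M ∘ₗ dd2 H M = 0 := by
  apply LinearMap.prod_ext <;> apply ext_pair <;> intro a m <;>
   simp [dd1, dd2, e11, e12, e21, e22, mul_smul, ← mul_assoc, r_ddu, r_duu, add_tmul, ← smul_tmul', tmul_add, m_ddu, m_duu, tmul_smul]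
  · module
  · module

lemma d2d3 : dd2 H M ∘ₗ dd3 H M = 0 := by
  apply ext_pair ; intro a m 
  simp [dd3, dd2, e11, e12, e21, e22, mul_smul, ← mul_assoc, r_ddu, r_duu, add_tmul, ← smul_tmul', tmul_add, m_ddu, m_duu, tmul_smul]
  constructor <;> module

lemma d0_surj : Function.Surjective (dd0 (R := R) (A := A) M) := fun m => ⟨1 ⊗ₜ m, by simp⟩

/-- elements that can be moved across the tensor modulo the image of `d₁` -/
def mvS : Subalgebra R A where
  carrier := {x | ∀ (b : A) (m : M), (b * x) ⊗ₜ[R] m - b ⊗ₜ[R] (x • m) ∈ LinearMap.range (dd1 H M)}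
  mul_mem' := by
    intro x y hx hy b m
    have h1 := hy (b * x) m
    have h2 := hx b (y • m)
    have := add_mem h1 h2
    rw [sub_add_sub_cancel] at this
    rwa [← mul_assoc, mul_smul]
  add_mem' := by
    intro x y hx hy b m
    have := add_mem (hx b m) (hy b m)
    rw [mul_add, add_smul, add_tmul, tmul_add]
    convert this using 1
    abel
  algebraMap_mem' := by
    intro r b m
    rw [algebraMap_smul, ← Algebra.commutes, ← Algebra.smul_def, smul_tmul, sub_self]
    exact zero_mem _

lemma mvS_top : mvS H M = ⊤ := by
  have hu : H.u ∈ mvS H M := fun b m => ⟨(b ⊗ₜ m, 0), by simp [dd1]⟩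
  have hd : H.d ∈ mvS H M := fun b m => ⟨(0, b ⊗ₜ m), by simp [dd1]⟩
  have hw : ∀ x, nw H.u H.d x ∈ mvS H M := fun x =>
    mul_mem (mul_mem (pow_mem hu _) (pow_mem (mul_mem hd hu) _)) (pow_mem hd _)
  rw [← Algebra.toSubmodule_eq_top, eq_top_iff, ← H.B.span_eq, span_le]
  rintro _ ⟨x, rfl⟩
  rw [H.hB]
  exact hw x

lemma exact0 : LinearMap.ker (dd0 (R := R) M) ≤ LinearMap.range (dd1 H M) := by
  have key : ∀ z, z - (1 : A) ⊗ₜ[R] (dd0 (R := R) M z) ∈ LinearMap.range (dd1 H M) := by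
    intro z
    induction z with
    | zero => simp
    | tmul a m =>
      have : a ∈ mvS H M := by rw [mvS_top]; trivial
      simpa using this 1 m
    | add x y hx hy =>
      have := add_mem hx hy
      rw [map_add, tmul_add]
      convert this using 1
      abel
  intro z hz
  have := key z
  rwa [LinearMap.mem_ker.1 hz, tmul_zero, sub_zero] at this

/-- filtration of the tensor product -/
def G (n : ℤ) : Submodule R (A ⊗[R] M) := span R {t | ∃ a ∈ L H n, ∃ m : M, t = a ⊗ₜ m}

variable {M}

lemma tmem {n : ℤ} {a : A} (ha : a ∈ L H n) (m : M) : a ⊗ₜ[R] m ∈ G H M n :=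
  subset_span ⟨a, ha, m, rfl⟩

lemma G_ind {n : ℤ} {X : Type} [AddCommGroup X] [Module R X] (f : A ⊗[R] M →ₗ[R] X)
    (S : Submodule R X) (h : ∀ a ∈ L H n, ∀ m, f (a ⊗ₜ m) ∈ S) {z} (hz : z ∈ G H M n) : f z ∈ S := by
  have : G H M n ≤ S.comap f := by
    apply span_le.2
    rintro _ ⟨a, ha, m, rfl⟩
    exact h a ha m
  exact this hz

lemma G_neg {n : ℤ} (hn : n < 0) {z} (hz : z ∈ G H M n) : z = 0 := by
  have h1 : ∀ a ∈ L H n, a = 0 := by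
    intro a ha
    have := LL_ind H.u H.d (LinearMap.id : A →ₗ[R] A) ⊥ (n := n) (fun i j k h => by
      exfalso; omega) ha
    simpa using this
  have := G_ind H (n := n) (LinearMap.id) ⊥ (fun a ha m => by simp [h1 a ha]) hz
  simpa using this

lemma G_mono {n n' : ℤ} (h : n ≤ n') : G H M n ≤ G H M n' := by
  apply span_mono
  rintro _ ⟨a, ha, m, rfl⟩
  exact ⟨a, L_mono H h ha, m, rfl⟩

lemma G_exists (z : A ⊗[R] M) : ∃ n, z ∈ G H M n := by
  have hA : ∀ a : A, ∃ n, a ∈ L H n := by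
    intro a
    have ha : a ∈ span R (Set.range H.B) := by rw [H.B.span_eq]; trivial
    induction ha using span_induction with
    | mem x h => 
      obtain ⟨⟨i, j, k⟩, rfl⟩ := h
      rw [H.hB]
      exact ⟨_, nw_mem_LL _ _ _ _ _ le_rfl⟩
    | zero => exact ⟨0, zero_mem _⟩
    | add x y _ _ hx hy =>
      obtain ⟨n, hn⟩ := hx
      obtain ⟨m, hm⟩ := hy
      exact ⟨max n m, add_mem (L_mono H (le_max_left _ _) hn) (L_mono H (le_max_right _ _) hm)⟩
    | smul r x _ hx =>
      obtain ⟨n, hn⟩ := hx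
      exact ⟨n, smul_mem _ _ hn⟩
  induction z with
  | zero => exact ⟨0, zero_mem _⟩
  | tmul a m =>
    obtain ⟨n, hn⟩ := hA a
    exact ⟨n, tmem H hn m⟩
  | add x y hx hy =>
    obtain ⟨n, hn⟩ := hx
    obtain ⟨m, hm⟩ := hy
    exact ⟨max n m, add_mem (G_mono H (le_max_left _ _) hn) (G_mono H (le_max_right _ _) hm)⟩

lemma descent {X : Type} [AddCommGroup X] (Kr Rg : AddSubgroup X) (Fil : ℤ → X → Prop)
    (hneg : ∀ n x, n < 0 → Fil n x → x = 0) (hex : ∀ x, ∃ n, Fil n x)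
    (hle : Rg ≤ Kr)
    (step : ∀ n x, x ∈ Kr → Fil n x → ∃ y ∈ Rg, Fil (n - 1) (x - y)) : Kr ≤ Rg := by
  have key : ∀ (N : ℕ) (n : ℤ), n < N → ∀ x ∈ Kr, Fil n x → x ∈ Rg := by
    intro N
    induction N with
    | zero =>
      intro n hn x _ hF
      rw [hneg n x (by simpa using hn) hF]
      exact zero_mem _
    | succ N ih =>
      intro n hn x hx hF
      obtain ⟨y, hy, hF'⟩ := step n x hx hF
      have := ih (n - 1) (by push_cast at hn; linarith) (x - y) (sub_mem hx (hle hy)) hF'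
      simpa using add_mem this hy
  intro x hx
  obtain ⟨n, hn⟩ := hex x
  exact key (n.toNat + 1) n (by push_cast; linarith [Int.self_le_toNat n]) x hx hn

/-- extension of an `R`-linear map to the tensor product -/
noncomputable abbrev hat (M : Type) [AddCommGroup M] [Module R M] (f : A →ₗ[R] A) :
    A ⊗[R] M →ₗ[R] A ⊗[R] M := f.rTensor M

lemma exists_pair (z : (A ⊗[R] M) × (A ⊗[R] M)) : ∃ n, z.1 ∈ G H M n ∧ z.2 ∈ G H M n := by
  obtain ⟨n, hn⟩ := G_exists H z.1
  obtain ⟨m, hm⟩ := G_exists H z.2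
  exact ⟨max n m, (G_mono H (le_max_left _ _) hn), (G_mono H (le_max_right _ _) hm)⟩

set_option maxHeartbeats 1000000 in
lemma F1_mem {n : ℤ} {p : A ⊗[R] M} (hp : p ∈ G H M n) :
    p - e11 H M (hat M (t1 H) p) - e12 H M (hat M (t2 H) p)
      - hat M (su H) (rho M H.u p - lam M H.u p) ∈ G H M (n - 1) := by
  refine G_ind H (LinearMap.id - (e11 H M).restrictScalars R ∘ₗ (hat M (t1 H)) -
    (e12 H M).restrictScalars R ∘ₗ (hat M (t2 H)) -
    hat M (su H) ∘ₗ ((rho M H.u - lam M H.u).restrictScalars R)) _ ?_ hp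
  intro a ha m
  have hI : su H (a * H.u) = a - t1 H a * H.d * H.d - t2 H a * H.d * H.u
      + H.α • (t2 H a * H.u * H.d) + H.φ • su H (t2 H a * H.u) := by rw [← I1]; abel
  have k1 : t1 H a ∈ L H (n - 1) := L_mono H (by linarith) (t1_L H ha)
  have k2 : t2 H a ∈ L H (n - 1) := L_mono H (by linarith) (t2_L H ha)
  have k3 : t1 H a * H.d ∈ L H (n - 1) := L_mono H (by linarith) (mul_d_L H (t1_L H ha))
  have k4 : t2 H a * H.u ∈ L H (n - 1) := L_mono H (by linarith) (mul_u_L H (t2_L H ha))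
  have k5 : t2 H a * H.d ∈ L H (n - 1) := L_mono H (by linarith) (mul_d_L H (t2_L H ha))
  have k6 : su H a ∈ L H (n - 1) := su_L H ha
  have k7 : su H (t2 H a * H.u) ∈ L H (n - 1) :=
    L_mono H (by linarith) (su_L H (mul_u_L H (t2_L H ha)))
  convert_to (H.α • (t1 H a * H.d) ⊗ₜ[R] (H.d • m) + H.β • (t1 H a) ⊗ₜ[R] (H.d • H.d • m)
     - (t2 H a * H.d) ⊗ₜ[R] (H.u • m) + H.α • (t2 H a) ⊗ₜ[R] (H.d • H.u • m)
     + H.β • ((t2 H a) ⊗ₜ[R] (H.u • H.d • m) + (t2 H a * H.u) ⊗ₜ[R] (H.d • m)) + H.φ • (t2 H a) ⊗ₜ[R] m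
     + su H a ⊗ₜ[R] (H.u • m) - H.φ • su H (t2 H a * H.u) ⊗ₜ[R] m) ∈ _
  · simp [mul_smul, ← mul_assoc, e11, e12, hI, add_tmul, sub_tmul, ← smul_tmul']
    try module
  repeat' first | (apply tmem; assumption) | apply add_mem | apply sub_mem | apply neg_mem | apply smul_mem

set_option maxHeartbeats 1000000 in
lemma F2_mem {n : ℤ} {p : A ⊗[R] M} (hp : p ∈ G H M n) :
    e21 H M (hat M (t1 H) p) + e22 H M (hat M (t2 H) p)
      + hat M (pd H) (rho M H.u p - lam M H.u p) ∈ G H M (n - 1) := by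
  refine G_ind H ((e21 H M).restrictScalars R ∘ₗ (hat M (t1 H)) +
    (e22 H M).restrictScalars R ∘ₗ (hat M (t2 H)) +
    hat M (pd H) ∘ₗ ((rho M H.u - lam M H.u).restrictScalars R)) _ ?_ hp
  intro a ha m
  have hI : pd H (a * H.u) = H.α • (t1 H a * H.d * H.u) + H.β • (t1 H a * H.u * H.d)
      + H.β • (t2 H a * H.u * H.u) + H.φ • (t1 H a + pd H (t2 H a * H.u)) := by rw [← I2]; abel
  have k1 : t1 H a ∈ L H (n - 1) := L_mono H (by linarith) (t1_L H ha)
  have k2 : t2 H a ∈ L H (n - 1) := L_mono H (by linarith) (t2_L H ha)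
  have k3 : t1 H a * H.d ∈ L H (n - 1) := L_mono H (by linarith) (mul_d_L H (t1_L H ha))
  have k3u : t1 H a * H.u ∈ L H (n - 1) := L_mono H (by linarith) (mul_u_L H (t1_L H ha))
  have k4 : t2 H a * H.u ∈ L H (n - 1) := L_mono H (by linarith) (mul_u_L H (t2_L H ha))
  have k8 : pd H (t2 H a * H.u) ∈ L H (n - 1) :=
    L_mono H (by linarith) (pd_L H (mul_u_L H (t2_L H ha)))
  have k9 : pd H a ∈ L H (n - 1) := pd_L H ha
  convert_to (H.φ • (t1 H a ⊗ₜ[R] m + pd H (t2 H a * H.u) ⊗ₜ[R] m) - pd H a ⊗ₜ[R] (H.u • m)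
     + t1 H a ⊗ₜ[R] (H.d • H.u • m) + (t1 H a * H.d) ⊗ₜ[R] (H.u • m)
     - H.α • t1 H a ⊗ₜ[R] (H.u • H.d • m) - H.β • (t1 H a * H.u) ⊗ₜ[R] (H.d • m)
     - H.φ • t1 H a ⊗ₜ[R] m + t2 H a ⊗ₜ[R] (H.u • H.u • m)
     - H.α • (t2 H a * H.u) ⊗ₜ[R] (H.u • m)) ∈ _
  · simp [mul_smul, ← mul_assoc, e21, e22, hI, add_tmul, sub_tmul, ← smul_tmul']
    try module
  repeat' first | (apply tmem; assumption) | apply add_mem | apply sub_mem | apply neg_mem | apply smul_mem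

lemma F3_mem {n : ℤ} {p : A ⊗[R] M} (hp : p ∈ G H M n) :
    hat M (su H) (rho M H.d p - lam M H.d p) ∈ G H M (n - 1) := by
  refine G_ind H (hat M (su H) ∘ₗ ((rho M H.d - lam M H.d).restrictScalars R)) _ ?_ hp
  intro a ha m
  have k6 : su H a ∈ L H (n - 1) := su_L H ha
  convert_to (- (su H a ⊗ₜ[R] (H.d • m))) ∈ _
  · simp [mul_smul, ← mul_assoc, su_d, add_tmul, sub_tmul, ← smul_tmul']
    try module
  repeat' first | (apply tmem; assumption) | apply add_mem | apply sub_mem | apply neg_mem | apply smul_mem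

lemma F4_mem {n : ℤ} {p : A ⊗[R] M} (hp : p ∈ G H M n) :
    p - hat M (pd H) (rho M H.d p - lam M H.d p) ∈ G H M (n - 1) := by
  refine G_ind H (LinearMap.id - hat M (pd H) ∘ₗ ((rho M H.d - lam M H.d).restrictScalars R)) _ ?_ hp
  intro a ha m
  have k9 : pd H a ∈ L H (n - 1) := pd_L H ha
  convert_to (pd H a ⊗ₜ[R] (H.d • m)) ∈ _
  · simp [mul_smul, ← mul_assoc, pd_d, add_tmul, sub_tmul, ← smul_tmul']
    try module
  repeat' first | (apply tmem; assumption) | apply add_mem | apply sub_mem | apply neg_mem | apply smul_mem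

lemma K1_mem {n : ℤ} {p : A ⊗[R] M} (hp : p ∈ G H M n) :
    p - hat M (t1 H) (e11 H M p) ∈ G H M (n - 1) := by
  refine G_ind H (LinearMap.id - hat M (t1 H) ∘ₗ ((e11 H M).restrictScalars R)) _ ?_ hp
  intro a ha m
  have k9 : pd H a ∈ L H (n - 1) := pd_L H ha
  have k1 : t1 H a ∈ L H (n - 1) := L_mono H (by linarith) (t1_L H ha)
  convert_to (H.α • pd H a ⊗ₜ[R] (H.d • m) +
    H.β • t1 H a ⊗ₜ[R] (H.d • H.d • m)) ∈ _
  · simp [mul_smul, ← mul_assoc, e11, t1_d, pd_d, add_tmul, sub_tmul, ← smul_tmul']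
    try module
  repeat' first | (apply tmem; assumption) | apply add_mem | apply sub_mem | apply neg_mem | apply smul_mem

lemma K2_mem {n : ℤ} {p : A ⊗[R] M} (hp : p ∈ G H M n) :
    lam M H.u (hat M (pd H) p) + H.β • rho M H.u (hat M (pd H) p) - hat M (t1 H) (e12 H M p) ∈ G H M (n - 1) := by
  refine G_ind H ((lam M H.u).restrictScalars R ∘ₗ hat M (pd H) +
    H.β • ((rho M H.u).restrictScalars R ∘ₗ hat M (pd H)) - hat M (t1 H) ∘ₗ ((e12 H M).restrictScalars R)) _ ?_ hp
  intro a ha m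
  have k1 : t1 H a ∈ L H (n - 1) := L_mono H (by linarith) (t1_L H ha)
  have k10 : pd H (pd H a) ∈ L H (n - 1) := L_mono H (by linarith) (pd_L H (pd_L H ha))
  have k11 : t1 H (a * H.u) ∈ L H (n - 1) := L_mono H (by linarith) (t1_L H (mul_u_L H ha))
  convert_to (-(H.φ • pd H (pd H a) ⊗ₜ[R] m) + H.α • t1 H a ⊗ₜ[R] (H.d • H.u • m) +
    H.β • t1 H a ⊗ₜ[R] (H.u • H.d • m) + H.β • t1 H (a * H.u) ⊗ₜ[R] (H.d • m) + H.φ • t1 H a ⊗ₜ[R] m) ∈ _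
  · simp [mul_smul, ← mul_assoc, e12, t1_d, pd_d, t1_du, add_tmul, sub_tmul, ← smul_tmul']
    try module
  repeat' first | (apply tmem; assumption) | apply add_mem | apply sub_mem | apply neg_mem | apply smul_mem

lemma K3_mem {n : ℤ} {p : A ⊗[R] M} (hp : p ∈ G H M n) :
    hat M (t2 H) (e11 H M p) ∈ G H M (n - 1) := by
  refine G_ind H (hat M (t2 H) ∘ₗ ((e11 H M).restrictScalars R)) _ ?_ hp
  intro a ha m
  have k2 : t2 H a ∈ L H (n - 1) := L_mono H (by linarith) (t2_L H ha)
  convert_to (-(H.β • t2 H a ⊗ₜ[R] (H.d • H.d • m))) ∈ _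
  · simp [mul_smul, ← mul_assoc, e11, t2_d, add_tmul, sub_tmul, ← smul_tmul']
    try module
  repeat' first | (apply tmem; assumption) | apply add_mem | apply sub_mem | apply neg_mem | apply smul_mem

lemma K4_mem {n : ℤ} {p : A ⊗[R] M} (hp : p ∈ G H M n) :
    p - rho M H.d (hat M (pd H) p) - H.β • lam M H.d (hat M (pd H) p) - hat M (t2 H) (e12 H M p) ∈ G H M (n - 1) := by
  refine G_ind H (LinearMap.id - (rho M H.d).restrictScalars R ∘ₗ hat M (pd H) -
    H.β • ((lam M H.d).restrictScalars R ∘ₗ hat M (pd H)) - hat M (t2 H) ∘ₗ ((e12 H M).restrictScalars R)) _ ?_ hp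
  intro a ha m
  have hI : t2 H (a * H.d * H.u) = a - pd H a * H.d := eq_sub_of_add_eq (t2_du H a)
  have k2 : t2 H a ∈ L H (n - 1) := L_mono H (by linarith) (t2_L H ha)
  have k9 : pd H a ∈ L H (n - 1) := pd_L H ha
  have k12 : t2 H (a * H.u) ∈ L H (n - 1) := L_mono H (by linarith) (t2_L H (mul_u_L H ha))
  convert_to (-(H.β • pd H a ⊗ₜ[R] (H.d • m)) + H.α • t2 H a ⊗ₜ[R] (H.d • H.u • m) +
    H.β • (t2 H a ⊗ₜ[R] (H.u • H.d • m) + t2 H (a * H.u) ⊗ₜ[R] (H.d • m)) + H.φ • t2 H a ⊗ₜ[R] m) ∈ _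
  · simp [mul_smul, ← mul_assoc, e12, t2_d, hI, add_tmul, sub_tmul, ← smul_tmul']
    try module
  repeat' first | (apply tmem; assumption) | apply add_mem | apply sub_mem | apply neg_mem | apply smul_mem

lemma J_mem {n : ℤ} {p : A ⊗[R] M} (hp : p ∈ G H M n) :
    p - hat M (pd H) (rho M H.d p + H.β • lam M H.d p) ∈ G H M (n - 1) := by
  refine G_ind H (LinearMap.id - hat M (pd H) ∘ₗ ((rho M H.d + H.β • lam M H.d).restrictScalars R)) _ ?_ hp
  intro a ha m
  have k9 : pd H a ∈ L H (n - 1) := pd_L H ha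
  convert_to (-(H.β • pd H a ⊗ₜ[R] (H.d • m))) ∈ _
  · simp [mul_smul, ← mul_assoc, pd_d, add_tmul, sub_tmul, ← smul_tmul']
    try module
  repeat' first | (apply tmem; assumption) | apply add_mem | apply sub_mem | apply neg_mem | apply smul_mem

variable (M)

lemma exact1 : LinearMap.ker (dd1 H M) ≤ LinearMap.range (dd2 H M) := by
  refine descent (LinearMap.ker (dd1 H M)).toAddSubgroup (LinearMap.range (dd2 H M)).toAddSubgroup
    (fun n x => x.1 ∈ G H M n ∧ x.2 ∈ G H M n)
    (fun n x hn hx => Prod.ext (G_neg H hn hx.1) (G_neg H hn hx.2)) (exists_pair H) ?_ ?_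
  · rintro _ ⟨x, rfl⟩
    exact DFunLike.congr_fun (d1d2 H M) x
  · rintro n ⟨p, q⟩ hx ⟨hp, hq⟩
    have h0 : (rho M H.u p - lam M H.u p) + (rho M H.d q - lam M H.d q) = 0 := hx
    have h1 := congrArg (hat M (su H)) h0
    have h2 := congrArg (hat M (pd H)) h0
    rw [map_add, map_zero] at h1 h2
    refine ⟨_, ⟨(hat M (t1 H) p, hat M (t2 H) p), rfl⟩, ?_, ?_⟩
    · have := sub_mem (F1_mem H hp) (F3_mem H hq)
      rw [sub_sub _ _ (hat M (su H) _), h1] at this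
      convert this using 1
      simp [dd2]
      abel
    · have := sub_mem (F4_mem H hq) (F2_mem H hp)
      rw [sub_sub, add_comm (e21 H M _ + _), ← add_assoc, add_comm (hat M (pd H) _), h2] at this
      convert this using 1
      simp [dd2]

lemma exact2 : LinearMap.ker (dd2 H M) ≤ LinearMap.range (dd3 H M) := by
  refine descent (LinearMap.ker (dd2 H M)).toAddSubgroup (LinearMap.range (dd3 H M)).toAddSubgroup
    (fun n x => x.1 ∈ G H M n ∧ x.2 ∈ G H M n)
    (fun n x hn hx => Prod.ext (G_neg H hn hx.1) (G_neg H hn hx.2)) (exists_pair H) ?_ ?_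
  · rintro _ ⟨x, rfl⟩
    exact DFunLike.congr_fun (d2d3 H M) x
  · rintro n ⟨p, q⟩ hx ⟨hp, hq⟩
    have h0 : e11 H M p + e12 H M q = 0 := congrArg Prod.fst hx
    have h1 := congrArg (hat M (t1 H)) h0
    have h2 := congrArg (hat M (t2 H)) h0
    rw [map_add, map_zero] at h1 h2
    refine ⟨_, ⟨hat M (pd H) q, rfl⟩, ?_, ?_⟩
    · have := add_mem (K1_mem H hp) (K2_mem H hq)
      rw [eq_neg_of_add_eq_zero_left h1] at this
      convert this using 1
      simp [dd3]
      abel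
    · have := sub_mem (K4_mem H hq) (K3_mem H hp)
      rw [eq_neg_of_add_eq_zero_left h2] at this
      convert this using 1
      simp [dd3]
      abel

lemma d3_inj : Function.Injective (dd3 H M) := by
  rw [← LinearMap.ker_eq_bot, eq_bot_iff]
  refine descent (LinearMap.ker (dd3 H M)).toAddSubgroup ⊥
    (fun n x => x ∈ G H M n)
    (fun n x hn hx => G_neg H hn hx) (G_exists H) bot_le ?_
  intro n p hx hp
  have h0 : rho M H.d p + H.β • lam M H.d p = 0 := congrArg Prod.snd hx
  refine ⟨0, zero_mem _, ?_⟩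
  have := J_mem H hp
  rw [h0, map_zero] at this
  exact this

end Cplx
end DownUpAux


set_option linter.all false

namespace DownUpAux

open Submodule TensorProduct CategoryTheory

section PD

/-- projective dimension of a module less than `n` -/
abbrev PD (A : Type) [Ring A] (M : Type) [AddCommGroup M] [Module A M] (n : ℕ) : Prop :=
  HasProjectiveDimensionLT (ModuleCat.of A M) n

variable {A : Type} [Ring A] {X Y Z : Type} [AddCommGroup X] [AddCommGroup Y] [AddCommGroup Z]
  [Module A X] [Module A Y] [Module A Z]

/-- short complex -/
abbrev sc (f : X →ₗ[A] Y) (g : Y →ₗ[A] Z) (h : Function.Exact f g) :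
    ShortComplex (ModuleCat.{0} A) :=
  ModuleCat.shortComplexOfCompEqZero f g h.linearMap_comp_eq_zero

lemma sc_exact (f : X →ₗ[A] Y) (g : Y →ₗ[A] Z) (h : Function.Exact f g) (hf : Function.Injective f)
    (hg : Function.Surjective g) : (sc f g h).ShortExact :=
  ModuleCat.shortComplex_shortExact _ h hf hg

lemma pd3 (f : X →ₗ[A] Y) (g : Y →ₗ[A] Z) (h : Function.Exact f g) (hf : Function.Injective f)
    (hg : Function.Surjective g) {n : ℕ} (h1 : PD A X n) (h2 : PD A Y (n + 1)) : PD A Z (n + 1) :=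
  (sc_exact f g h hf hg).hasProjectiveDimensionLT_X₃ n h1 h2

lemma pd2 (f : X →ₗ[A] Y) (g : Y →ₗ[A] Z) (h : Function.Exact f g) (hf : Function.Injective f)
    (hg : Function.Surjective g) {n : ℕ} (h1 : PD A X n) (h2 : PD A Z n) : PD A Y n :=
  (sc_exact f g h hf hg).hasProjectiveDimensionLT_X₂ n h1 h2

lemma pd1 (f : X →ₗ[A] Y) (g : Y →ₗ[A] Z) (h : Function.Exact f g) (hf : Function.Injective f)
    (hg : Function.Surjective g) {n : ℕ} (h1 : PD A Y n) (h2 : PD A Z (n + 1)) : PD A X n :=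
  (sc_exact f g h hf hg).hasProjectiveDimensionLT_X₁ n h1 h2

lemma pd_mono {n m : ℕ} (h : n ≤ m) (h1 : PD A X n) : PD A X m :=
  hasProjectiveDimensionLT_of_ge _ n m h

lemma pd_proj : PD A X 1 ↔ Module.Projective A X := by
  rw [PD, ← projective_iff_hasProjectiveDimensionLT_one]
  exact (IsProjective.iff_projective X).symm

lemma pd_prod {n : ℕ} (h1 : PD A X n) (h2 : PD A Y n) : PD A (X × Y) n :=
  pd2 (LinearMap.inl A X Y) (LinearMap.snd A X Y) Function.Exact.inl_snd
    LinearMap.inl_injective LinearMap.snd_surjective h1 h2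

end PD

section BC
variable {S : Type} [CommRing S] (B : Type) [Ring B] [Algebra S B] [Module.Flat S B]

omit [Module.Flat S B] in
lemma bc_exact {X Y Z : Type} [AddCommGroup X] [AddCommGroup Y] [AddCommGroup Z] [Module S X]
    [Module S Y] [Module S Z] (f : X →ₗ[S] Y) (g : Y →ₗ[S] Z) (h : Function.Exact f g)
    (hg : Function.Surjective g) : Function.Exact (f.baseChange B) (g.baseChange B) := by
  have h9 : Function.Exact (f.lTensor B) (g.lTensor B) := lTensor_exact B h hg
  exact h9

lemma bc_step {X Y Z : Type} [AddCommGroup X] [AddCommGroup Y] [AddCommGroup Z] [Module S X]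
    [Module S Y] [Module S Z] (f : X →ₗ[S] Y) (g : Y →ₗ[S] Z) (h : Function.Exact f g)
    (hf : Function.Injective f)
    (hg : Function.Surjective g) (n : ℕ) (h1 : PD B (B ⊗[S] X) n) (h2 : PD B (B ⊗[S] Y) (n + 1)) :
    PD B (B ⊗[S] Z) (n + 1) := by
  have hi : Function.Injective (f.baseChange B) := by
    have := Module.Flat.lTensor_preserves_injective_linearMap (M := B) f hf
    exact this
  have hs : Function.Surjective (g.baseChange B) := by
    have := LinearMap.lTensor_surjective B hg
    exact this
  exact pd3 (f.baseChange B) (g.baseChange B) (bc_exact B f g h hg) hi hs h1 h2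

lemma exists_pres {S : Type} [CommRing S] (M : Type) [AddCommGroup M] [Module S M] :
    ∃ (X Y : Type) (_ : AddCommGroup X) (_ : AddCommGroup Y) (_ : Module S X) (_ : Module S Y)
      (f : X →ₗ[S] Y) (g : Y →ₗ[S] M), Function.Exact f g ∧ Function.Injective f ∧
      Function.Surjective g ∧ Module.Projective S Y :=
  ⟨LinearMap.ker (Finsupp.linearCombination S (id : M → M)), M →₀ S, inferInstance, inferInstance,
    inferInstance, inferInstance, (LinearMap.ker (Finsupp.linearCombination S (id : M → M))).subtype,
    Finsupp.linearCombination S (id : M → M), LinearMap.exact_subtype_ker_map _,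
    injective_subtype _, Finsupp.linearCombination_id_surjective S M, inferInstance⟩

lemma pd_baseChange (n : ℕ) : ∀ (M : Type) [AddCommGroup M] [Module S M],
    PD S M (n + 1) → PD B (B ⊗[S] M) (n + 1) := by
  induction n with
  | zero =>
    intro M _ _ h
    rw [zero_add, pd_proj] at *
    infer_instance
  | succ n ih =>
    intro M _ _ h
    obtain ⟨X, Y, _, _, _, _, f, g, hex, hf, hg, hY⟩ := exists_pres (S := S) M
    have hF : PD S Y 1 := pd_proj.2 hY
    have h1 : PD S X (n + 1) := pd1 f g hex hf hg (pd_mono (by omega) hF) h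
    have h2 := ih _ h1
    have h3 : PD B (B ⊗[S] Y) 1 := pd_proj.2 inferInstance
    exact bc_step B f g hex hf hg _ h2 (pd_mono (by omega) h3)
end BC

section Poly
open Polynomial

variable {S : Type} [CommRing S] (M : Type) [AddCommGroup M] [Module S M] [Module S[X] M]
  [IsScalarTower S S[X] M]

noncomputable def dX : S[X] →ₗ[S] S[X] where
  toFun := divX
  map_add' := by intros; ext; simp [coeff_divX]
  map_smul' := by intros; ext; simp [coeff_divX]

lemma dX_pow_coeff (N : ℕ) (p : S[X]) (k : ℕ) : ((dX ^ N) p).coeff k = p.coeff (k + N) := by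
  induction N generalizing k with
  | zero => simp
  | succ N ih =>
    rw [pow_succ', Module.End.mul_apply]
    show (divX _).coeff k = _
    rw [coeff_divX, ih]
    congr 1; ring

/-- the difference map -/
noncomputable def df : S[X] ⊗[S] M →ₗ[S[X]] S[X] ⊗[S] M := rho M Polynomial.X - lam M Polynomial.X

lemma dX_rho (z : S[X] ⊗[S] M) : (dX.rTensor M) (rho M Polynomial.X z) = z := by
  induction z with
  | zero => simp
  | tmul a m =>
    have : (dX : S[X] →ₗ[S] S[X]) (a * Polynomial.X) = a := by
      show (a * Polynomial.X).divX = a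
      ext k; simp [coeff_divX]
    simp [this]
  | add x y hx hy => simp [hx, hy]

lemma dX_lam (z : S[X] ⊗[S] M) : (dX.rTensor M) (lam M Polynomial.X z) = lam M Polynomial.X ((dX.rTensor M) z) := by
  induction z with
  | zero => simp
  | tmul a m => simp
  | add x y hx hy => simp [hx, hy]

lemma dX_nil (z : S[X] ⊗[S] M) : ∃ N : ℕ, ∀ n ≥ N, ((dX ^ n).rTensor M) z = 0 := by
  induction z with
  | zero => exact ⟨0, by simp⟩
  | tmul a m =>
    refine ⟨a.natDegree + 1, fun n hn => ?_⟩
    have : (dX ^ n) a = 0 := by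
      ext k
      rw [dX_pow_coeff]
      exact coeff_eq_zero_of_natDegree_lt (by omega)
    simp [this]
  | add x y hx hy =>
    obtain ⟨N, hN⟩ := hx
    obtain ⟨N', hN'⟩ := hy
    refine ⟨max N N', fun n hn => ?_⟩
    rw [map_add, hN n (le_trans (le_max_left _ _) hn), hN' n (le_trans (le_max_right _ _) hn), add_zero]

lemma df_inj : Function.Injective (df (S := S) M) := by
  rw [← LinearMap.ker_eq_bot, eq_bot_iff]
  intro z hz
  have h0 : rho M Polynomial.X z = lam M Polynomial.X z := sub_eq_zero.1 hz
  have h1 : z = lam M Polynomial.X ((dX.rTensor M) z) := by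
    rw [← dX_lam, ← h0, dX_rho]
  have h2 : ∀ n : ℕ, z = ((lam M Polynomial.X : S[X] ⊗[S] M →ₗ[S[X]] S[X] ⊗[S] M) ^ n) (((dX ^ n).rTensor M) z) := by
    intro n
    induction n with
    | zero =>
      rw [pow_zero]
      change z = (LinearMap.rTensor M (LinearMap.id : S[X] →ₗ[S] S[X])) z
      rw [LinearMap.rTensor_id]; rfl
    | succ n ih =>
      have h4 : ∀ w : S[X] ⊗[S] M, (((dX : S[X] →ₗ[S] S[X]) ^ (n + 1)).rTensor M) w = dX.rTensor M (((dX ^ n).rTensor M) w) := by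
        intro w; rw [pow_succ', ← LinearMap.comp_apply, ← LinearMap.rTensor_comp]; rfl
      have h3 : ∀ (k : ℕ) (w : S[X] ⊗[S] M), dX.rTensor M (((lam M Polynomial.X : S[X] ⊗[S] M →ₗ[S[X]] S[X] ⊗[S] M) ^ k) w) =
         ((lam M Polynomial.X : S[X] ⊗[S] M →ₗ[S[X]] S[X] ⊗[S] M) ^ k) (dX.rTensor M w) := by
        intro k
        induction k with
        | zero => simp
        | succ k ih => intro w; rw [pow_succ, Module.End.mul_apply, ih, dX_lam]; rfl
      rw [h4, pow_succ', Module.End.mul_apply, ← h3, ← ih, ← h1]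
  obtain ⟨N, hN⟩ := dX_nil M z
  have := h2 N
  rw [hN N le_rfl, map_zero] at this
  exact this

def mvX : Subalgebra S S[X] where
  carrier := {x | ∀ (b : S[X]) (m : M), (b * x) ⊗ₜ[S] m - b ⊗ₜ[S] (x • m) ∈ LinearMap.range (df (S := S) M)}
  mul_mem' := by
    intro x y hx hy b m
    have h1 := hy (b * x) m
    have h2 := hx b (y • m)
    have := add_mem h1 h2
    rw [sub_add_sub_cancel] at this
    rwa [← mul_assoc, mul_smul]
  add_mem' := by
    intro x y hx hy b m
    have := add_mem (hx b m) (hy b m)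
    rw [mul_add, add_smul, add_tmul, tmul_add]
    convert this using 1
    abel
  algebraMap_mem' := by
    intro r b m
    rw [algebraMap_smul, ← Algebra.commutes, ← Algebra.smul_def, smul_tmul, sub_self]
    exact zero_mem _

lemma df_exact : Function.Exact (df (S := S) M) (dd0 (R := S) M) := by
  have htop : mvX (S := S) M = ⊤ := by
    rw [eq_top_iff, ← Polynomial.adjoin_X, Algebra.adjoin_le_iff, Set.singleton_subset_iff]
    intro b m
    exact ⟨b ⊗ₜ m, by simp [df]⟩
  have key : ∀ z, z - (1 : S[X]) ⊗ₜ[S] (dd0 (R := S) M z) ∈ LinearMap.range (df (S := S) M) := by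
    intro z
    induction z with
    | zero => simp
    | tmul a m =>
      have : a ∈ mvX (S := S) M := by rw [htop]; trivial
      simpa using this 1 m
    | add x y hx hy =>
      have := add_mem hx hy
      rw [map_add, tmul_add]
      convert this using 1
      abel
  intro z
  constructor
  · intro hz
    have := key z
    rwa [hz, tmul_zero, sub_zero] at this
  · rintro ⟨w, rfl⟩
    induction w with
    | zero => simp
    | tmul a m => simp [df, mul_smul]
    | add x y hx hy => simp [hx, hy]

lemma pd_poly (n : ℕ) (hS : ∀ (M : Type) [AddCommGroup M] [Module S M], PD S M (n + 1))
    (M : Type) [AddCommGroup M] [Module S[X] M] : PD S[X] M (n + 2) := by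
  letI : Module S M := Module.compHom M (algebraMap S S[X])
  haveI : IsScalarTower S S[X] M := ⟨fun r a m => by
    rw [Algebra.smul_def, mul_smul]; rfl⟩
  have h := pd_baseChange S[X] n M (hS M)
  refine pd3 (df (S := S) M) (dd0 (R := S) M) (df_exact M) (df_inj M) (d0_surj M) h
    (pd_mono (by omega) h)

end Poly

lemma pd_ringEquiv {R R' : Type} [Ring R] [Ring R'] (e : R ≃+* R') (n : ℕ)
    (h : ∀ (M : Type) [AddCommGroup M] [Module R M], PD R M (n + 1))
    (M : Type) [AddCommGroup M] [Module R' M] : PD R' M (n + 1) := by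
  letI : Module R M := Module.compHom M e.toRingHom
  letI := RingHomInvPair.of_ringEquiv e
  letI := RingHomInvPair.of_ringEquiv e.symm
  haveI := h M
  let e' : (ModuleCat.of R M) ≃ₛₗ[RingHomClass.toRingHom e] (ModuleCat.of R' M) :=
    { AddEquiv.refl M with
      map_smul' := fun r m => rfl }
  exact ModuleCat.hasProjectiveDimensionLE_of_semiLinearEquiv e e' n

lemma hilbert {K : Type} [Field K] (n : ℕ) : ∀ (M : Type) [AddCommGroup M]
    [Module (MvPolynomial (Fin n) K) M], PD (MvPolynomial (Fin n) K) M (n + 1) := by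
  induction n with
  | zero =>
    intro M _ _
    refine pd_ringEquiv (MvPolynomial.isEmptyRingEquiv K (Fin 0)).symm 0 ?_ M
    intro M _ _
    exact pd_proj.2 inferInstance
  | succ n ih =>
    intro M _ _
    refine pd_ringEquiv (MvPolynomial.finSuccEquiv K n).toRingEquiv.symm (n + 1) ?_ M
    intro M _ _
    exact pd_poly n ih M

section Upper
variable {R : Type} [CommRing R] {A : Type} [Ring A] [Algebra R A] (H : PBW R A)

include H in
lemma pd_upper (n : ℕ) (hR : ∀ (M : Type) [AddCommGroup M] [Module R M], PD R M (n + 1))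
    (M : Type) [AddCommGroup M] [Module A M] : PD A M (n + 4) := by
  letI : Module R M := Module.compHom M (algebraMap R A)
  haveI : IsScalarTower R A M := ⟨fun r a m => by
    rw [Algebra.smul_def, mul_smul]; rfl⟩
  haveI : Module.Free R A := Module.Free.of_basis H.B
  have h := pd_baseChange A n M (hR M)
  have h2 : PD A (LinearMap.range (dd2 H M)) (n + 2) := by
    refine pd3 (dd3 H M) (dd2 H M).rangeRestrict ?_ (d3_inj H M)
      (dd2 H M).surjective_rangeRestrict h (pd_prod (pd_mono (by omega) h) (pd_mono (by omega) h))
    intro x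
    constructor
    · intro hx
      exact exact2 H M (by simpa [Subtype.ext_iff] using hx)
    · rintro ⟨w, rfl⟩
      exact Subtype.ext (DFunLike.congr_fun (d2d3 H M) w)
  have h1 : PD A (LinearMap.range (dd1 H M)) (n + 3) := by
    refine pd3 (LinearMap.range (dd2 H M)).subtype (dd1 H M).rangeRestrict ?_ (injective_subtype _)
      (dd1 H M).surjective_rangeRestrict h2 (pd_prod (pd_mono (by omega) h) (pd_mono (by omega) h))
    intro x
    constructor
    · intro hx
      exact ⟨⟨x, exact1 H M (by simpa [Subtype.ext_iff] using hx)⟩, rfl⟩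
    · rintro ⟨⟨_, w, rfl⟩, rfl⟩
      exact Subtype.ext (DFunLike.congr_fun (d1d2 H M) w)
  refine pd3 (LinearMap.range (dd1 H M)).subtype (dd0 (R := R) M) ?_ (injective_subtype _)
      (d0_surj M) h1 (pd_mono (by omega) h)
  intro x
  constructor
  · intro hx
    exact ⟨⟨x, exact0 H M hx⟩, rfl⟩
  · rintro ⟨⟨_, w, rfl⟩, rfl⟩
    exact (DFunLike.congr_fun (d0d1 H M) w)

end Upper

end DownUpAux


set_option linter.all false

namespace DownUpAux
open DownUp

section Concrete
variable {K : Type} [Field K] {n : ℕ} (α β : K) (φ : MvPolynomial (Fin n) K)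

local notation "RR" => MvPolynomial (Fin n) K

lemma smul_F (a : K) (x : F K n) : a • x = (MvPolynomial.C a : RR) • x := by
  rw [Algebra.smul_def, Algebra.smul_def]
  rfl

noncomputable def mkA : F K n →ₐ[RR] A α β φ := RingQuot.mkAlgHom RR (Rel α β φ)

noncomputable def uA : A α β φ := mkA α β φ uF
noncomputable def dA : A α β φ := mkA α β φ dF

lemma dduA : dA α β φ * dA α β φ * uA α β φ = (MvPolynomial.C α : RR) • (dA α β φ * uA α β φ * dA α β φ) +
    (MvPolynomial.C β : RR) • (uA α β φ * dA α β φ * dA α β φ) + φ • dA α β φ := by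
  have h : mkA α β φ _ = mkA α β φ _ := RingQuot.mkAlgHom_rel RR (Rel.ddu (α := α) (β := β) (φ := φ))
  rw [smul_F α, smul_F β, ← Algebra.smul_def] at h
  simp only [map_mul, map_add, map_smul] at h
  exact h

lemma duuA : dA α β φ * uA α β φ * uA α β φ = (MvPolynomial.C α : RR) • (uA α β φ * dA α β φ * uA α β φ) +
    (MvPolynomial.C β : RR) • (uA α β φ * uA α β φ * dA α β φ) + φ • uA α β φ := by
  have h : mkA α β φ _ = mkA α β φ _ := RingQuot.mkAlgHom_rel RR (Rel.duu (α := α) (β := β) (φ := φ))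
  rw [smul_F α, smul_F β, ← Algebra.commutes, ← Algebra.smul_def] at h
  simp only [map_mul, map_add, map_smul] at h
  exact h

/-- universal property -/
lemma liftA {X : Type} [Semiring X] [Algebra RR X] (u d : X)
    (ddu : d * d * u = (MvPolynomial.C α : RR) • (d * u * d) + (MvPolynomial.C β : RR) • (u * d * d) + φ • d)
    (duu : d * u * u = (MvPolynomial.C α : RR) • (u * d * u) + (MvPolynomial.C β : RR) • (u * u * d) + φ • u) :
    ∃ f : A α β φ →ₐ[RR] X, f (uA α β φ) = u ∧ f (dA α β φ) = d := by
  let g : F K n →ₐ[RR] X := FreeAlgebra.lift RR (fun x => match x with | Gen.u => u | Gen.d => d)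
  have gu : g uF = u := by simp [g, uF]
  have gd : g dF = d := by simp [g, dF]
  have hg : ∀ ⦃x y⦄, Rel α β φ x y → g x = g y := by
    rintro _ _ (_ | _)
    · rw [smul_F α, smul_F β, ← Algebra.smul_def]
      simpa only [map_mul, map_add, map_smul, gu, gd] using ddu
    · rw [smul_F α, smul_F β, ← Algebra.commutes, ← Algebra.smul_def]
      simpa only [map_mul, map_add, map_smul, gu, gd] using duu
  refine ⟨RingQuot.liftAlgHom RR ⟨g, hg⟩, ?_, ?_⟩
  · rw [uA, mkA, RingQuot.liftAlgHom_mkAlgHom_apply, gu]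
  · rw [dA, mkA, RingQuot.liftAlgHom_mkAlgHom_apply, gd]

lemma genA : Algebra.adjoin RR {uA α β φ, dA α β φ} = ⊤ := by
  have h1 : Algebra.adjoin RR {uF, dF} = (⊤ : Subalgebra RR (F K n)) := by
    rw [eq_top_iff, ← FreeAlgebra.adjoin_range_ι]
    apply Algebra.adjoin_mono
    rintro _ ⟨x, rfl⟩
    cases x
    · exact Or.inl rfl
    · exact Or.inr rfl
  have h2 := congrArg (Subalgebra.map (mkA α β φ)) h1
  rw [AlgHom.map_adjoin, Set.image_pair, Algebra.map_top, (AlgHom.range_eq_top (mkA α β φ)).2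
    (RingQuot.mkAlgHom_surjective RR (Rel α β φ))] at h2
  exact h2

lemma exists_repA : ∃ f : A α β φ →ₐ[RR] Module.End RR (PP (MvPolynomial.C α : RR) (MvPolynomial.C β)),
    f (uA α β φ) = opU _ _ ∧ f (dA α β φ) = opD _ _ φ :=
  liftA α β φ _ _ (op_ddu _ _ _) (op_duu _ _ _)

noncomputable def pbwA : PBW RR (A α β φ) :=
  mkPBW (MvPolynomial.C α) (MvPolynomial.C β) φ
    (exists_repA α β φ).choose (uA α β φ) (dA α β φ)
    (exists_repA α β φ).choose_spec.1
    (exists_repA α β φ).choose_spec.2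
    (dduA α β φ) (duuA α β φ) (genA α β φ)

lemma pd_A (M : Type) [AddCommGroup M] [Module (A α β φ) M] : PD (A α β φ) M (n + 4) :=
  pd_upper (pbwA α β φ) n (hilbert n) M

end Concrete
end DownUpAux


set_option linter.all false

namespace DownUpAux
open CategoryTheory

section Bridge
variable {A : Type} [Ring A]

lemma root_trivial_iff {X : ModuleCat.{0} A} (P : ProjectiveResolution X) (Y : ModuleCat.{0} A) (k : ℕ) :
    Subsingleton (((_root_.Ext ℤ (ModuleCat.{0} A) (k + 1)).obj (Opposite.op X)).obj Y) ↔
    ∀ f : P.complex.X (k + 1) ⟶ Y, P.complex.d (k + 2) (k + 1) ≫ f = 0 →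
      ∃ g : P.complex.X k ⟶ Y, P.complex.d (k + 1) k ≫ g = f := by
  rw [← ModuleCat.isZero_iff_subsingleton, (P.isoExt (R := ℤ) (k + 1) Y).isZero_iff,
    ← HomologicalComplex.exactAt_iff_isZero_homology,
    HomologicalComplex.exactAt_iff' _ k (k + 1) (k + 2) (by simp) (by simp),
    ShortComplex.moduleCat_exact_iff]
  rfl

lemma ext_trivial_iff {X : ModuleCat.{0} A} (P : ProjectiveResolution X) (Y : ModuleCat.{0} A) (k : ℕ) :
    Subsingleton (Abelian.Ext.{0} X Y (k + 1)) ↔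
    ∀ f : P.complex.X (k + 1) ⟶ Y, P.complex.d (k + 2) (k + 1) ≫ f = 0 →
      ∃ g : P.complex.X k ⟶ Y, P.complex.d (k + 1) k ≫ g = f := by
  constructor
  · intro h f hf
    rw [← P.extMk_eq_zero_iff f (k + 2) rfl hf k rfl]
    exact Subsingleton.elim _ _
  · intro h
    refine ⟨fun a b => ?_⟩
    have key : ∀ a : Abelian.Ext.{0} X Y (k + 1), a = 0 := by
      intro a
      obtain ⟨f, hf, rfl⟩ := P.extMk_surjective a (k + 2) rfl
      exact (P.extMk_eq_zero_iff f (k + 2) rfl hf k rfl).2 (h f hf)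
    rw [key a, key b]

lemma bridge (X Y : ModuleCat.{0} A) (k : ℕ) :
    Subsingleton (((_root_.Ext ℤ (ModuleCat.{0} A) (k + 1)).obj (Opposite.op X)).obj Y) ↔
    Subsingleton (Abelian.Ext.{0} X Y (k + 1)) := by
  obtain ⟨P⟩ := HasProjectiveResolution.out (Z := X)
  rw [root_trivial_iff P, ext_trivial_iff P]

/-- upper bound -/
lemma gd_le (N : ℕ) (h : ∀ (M : Type) [AddCommGroup M] [Module A M], PD A M (N + 1)) :
    globalDim A ≤ N := by
  apply sSup_le
  rintro _ ⟨k, rfl, X, Y, hn⟩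
  by_contra hk
  rw [not_le, Nat.cast_lt] at hk
  obtain ⟨k, rfl⟩ : ∃ k', k = k' + 1 := ⟨k - 1, by omega⟩
  rw [← not_subsingleton_iff_nontrivial, bridge] at hn
  apply hn
  haveI : HasProjectiveDimensionLT X (N + 1) := h X
  refine ⟨fun a b => ?_⟩
  rw [Abelian.Ext.eq_zero_of_hasProjectiveDimensionLT a (N + 1) (by omega),
    Abelian.Ext.eq_zero_of_hasProjectiveDimensionLT b (N + 1) (by omega)]

lemma le_gd (N : ℕ) (X Y : ModuleCat.{0} A) (h : Nontrivial (Abelian.Ext.{0} X Y (N + 1))) :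
    ((N + 1 : ℕ) : ℕ∞) ≤ globalDim A := by
  apply le_sSup
  refine ⟨N + 1, rfl, X, Y, ?_⟩
  rw [← not_subsingleton_iff_nontrivial, bridge, not_subsingleton_iff_nontrivial]
  exact h

end Bridge

section Lower
variable {A : Type} [Ring A] {X Y Z : Type} [AddCommGroup X] [AddCommGroup Y] [AddCommGroup Z]
  [Module A X] [Module A Y] [Module A Z] (N : Type) [AddCommGroup N] [Module A N]

/-- nontrivial Ext -/
abbrev NT (A : Type) [Ring A] (X N : Type) [AddCommGroup X] [Module A X] [AddCommGroup N]
    [Module A N] (k : ℕ) : Prop :=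
  ∃ e : Abelian.Ext.{0} (ModuleCat.of A X) (ModuleCat.of A N) k, e ≠ 0

/-- first step -/
lemma nt_one (f : X →ₗ[A] Y) (g : Y →ₗ[A] Z) (h : Function.Exact f g) (hf : Function.Injective f)
    (hg : Function.Surjective g) (p : X →ₗ[A] N) (hp : ∀ q : Y →ₗ[A] N, q ∘ₗ f ≠ p) :
    NT A Z N 1 := by
  have S := sc_exact f g h hf hg
  refine ⟨S.extClass.comp (Abelian.Ext.mk₀ (ModuleCat.ofHom p)) (add_zero 1), fun h0 => ?_⟩
  obtain ⟨x, hx⟩ := Abelian.Ext.contravariant_sequence_exact₁ S _ _ (add_zero 1) h0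
  obtain ⟨q, rfl⟩ := (Abelian.Ext.mk₀_bijective _ _).2 x
  rw [Abelian.Ext.mk₀_comp_mk₀] at hx
  have := (Abelian.Ext.mk₀_bijective _ _).1 hx
  exact hp q.hom (congrArg ModuleCat.Hom.hom this)

/-- dimension shift through a projective -/
lemma nt_shift (f : X →ₗ[A] Y) (g : Y →ₗ[A] Z) (h : Function.Exact f g) (hf : Function.Injective f)
    (hg : Function.Surjective g) (hY : Module.Projective A Y) (k : ℕ) (hX : NT A X N (k + 1)) :
    NT A Z N (k + 2) := by
  have S := sc_exact f g h hf hg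
  obtain ⟨e, he⟩ := hX
  refine ⟨S.extClass.comp e (by omega), fun h0 => he ?_⟩
  obtain ⟨x, hx⟩ := Abelian.Ext.contravariant_sequence_exact₁ S _ _ (by omega) h0
  haveI : HasProjectiveDimensionLT (sc f g h).X₂ 1 := pd_proj.2 hY
  rw [← hx, Abelian.Ext.eq_zero_of_hasProjectiveDimensionLT x 1 (by omega), Abelian.Ext.comp_zero]

/-- dimension shift through multiplication by an element acting by zero -/
lemma nt_central (f : X →ₗ[A] X) (g : X →ₗ[A] Z) (h : Function.Exact f g) (hf : Function.Injective f)
    (hg : Function.Surjective g) (k : ℕ)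
    (h0 : ∀ e : Abelian.Ext.{0} (ModuleCat.of A X) (ModuleCat.of A N) k,
      (Abelian.Ext.mk₀ (ModuleCat.ofHom f)).comp e (zero_add k) = 0) (hX : NT A X N k) :
    NT A Z N (k + 1) := by
  have S := sc_exact f g h hf hg
  obtain ⟨e, he⟩ := hX
  refine ⟨S.extClass.comp e (by omega), fun h1 => he ?_⟩
  obtain ⟨x, hx⟩ := Abelian.Ext.contravariant_sequence_exact₁ S _ _ (by omega) h1
  rw [← hx]
  exact h0 x
 
end Lower
end DownUpAux


set_option linter.all false

namespace DownUpAux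
open CategoryTheory TensorProduct Submodule

section Central
open scoped ModuleCat.Algebra
variable {R : Type} [CommRing R] {A : Type} [Ring A] [Algebra R A]

lemma central_zero (X N : Type) [AddCommGroup X] [Module A X] [AddCommGroup N] [Module A N] (r : R)
    (f : X →ₗ[A] X) (hf : ∀ x, f x = algebraMap R A r • x) (hN : ∀ y : N, algebraMap R A r • y = 0)
    (k : ℕ) (e : Abelian.Ext.{0} (ModuleCat.of A X) (ModuleCat.of A N) k) :
    (Abelian.Ext.mk₀ (ModuleCat.ofHom f)).comp e (zero_add k) = 0 := by
  have h1 : ModuleCat.ofHom f = r • 𝟙 (ModuleCat.of A X) := by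
    ext x
    exact hf x
  have h2 : r • 𝟙 (ModuleCat.of A N) = 0 := by
    ext x
    exact hN x
  have h3 : Abelian.Ext.mk₀ (r • 𝟙 (ModuleCat.of A X)) = r • Abelian.Ext.mk₀ (𝟙 (ModuleCat.of A X)) := by
    rw [Abelian.Ext.smul_eq_comp_mk₀, Abelian.Ext.mk₀_comp_mk₀, Category.id_comp]
  rw [h1, h3, Abelian.Ext.smul_comp, Abelian.Ext.mk₀_id_comp, Abelian.Ext.smul_eq_comp_mk₀, h2,
    Abelian.Ext.mk₀_zero, Abelian.Ext.comp_zero]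

end Central

section Wr
variable {A : Type} [Ring A] {S : Type} [CommRing S]

/-- a commutative ring seen as a module through a ring homomorphism -/
def Wr (g : A →+* S) : Type := S

instance (g : A →+* S) : CommRing (Wr g) := inferInstanceAs (CommRing S)
instance (g : A →+* S) : Module A (Wr g) := Module.compHom S g

lemma Wr_smul (g : A →+* S) (a : A) (x : Wr g) : a • x = (show Wr g from g a) * x := rfl

/-- ring homomorphisms as module homomorphisms -/
def Wr.map {S' : Type} [CommRing S'] (g : A →+* S) (h : S →+* S') : Wr g →ₗ[A] Wr (h.comp g) where
  toFun x := h x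
  map_add' := map_add h
  map_smul' a x := map_mul h (g a) x

/-- multiplication -/
def Wr.mul (g : A →+* S) (s : S) : Wr g →ₗ[A] Wr g where
  toFun x := (show Wr g from s) * x
  map_add' x y := mul_add _ _ _
  map_smul' a x := by
    simp only [Wr_smul, RingHom.id_apply]
    exact mul_left_comm _ _ _

end Wr

section Down
open MvPolynomial
variable {K : Type} [Field K]

noncomputable def hh (i : ℕ) : MvPolynomial (Fin (i + 1)) K →+* MvPolynomial (Fin i) K :=
  Polynomial.constantCoeff.comp (finSuccEquiv K i).toRingHom

lemma hh_surj (i : ℕ) : Function.Surjective (hh (K := K) i) := by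
  intro p
  obtain ⟨q, hq⟩ := (finSuccEquiv K i).surjective (Polynomial.C p)
  refine ⟨q, ?_⟩
  show Polynomial.constantCoeff (finSuccEquiv K i q) = p
  rw [hq]; simp

lemma hh_exact (i : ℕ) (p : MvPolynomial (Fin (i + 1)) K) : hh i p = 0 ↔ ∃ q, X 0 * q = p := by
  have h1 : hh i p = (finSuccEquiv K i p).coeff 0 := rfl
  rw [h1, ← Polynomial.X_dvd_iff]
  constructor
  · rintro ⟨q, hq⟩
    obtain ⟨q, rfl⟩ := (finSuccEquiv K i).surjective q
    rw [← finSuccEquiv_X_zero, ← map_mul] at hq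
    exact ⟨q, ((finSuccEquiv K i).injective hq).symm⟩
  · rintro ⟨q, rfl⟩
    rw [map_mul, finSuccEquiv_X_zero]
    exact dvd_mul_right _ _

lemma hh_cc (i : ℕ) : (constantCoeff (R := K)).comp (hh (K := K) i) = constantCoeff := by
  apply MvPolynomial.ringHom_ext
  · intro p
    show constantCoeff (Polynomial.constantCoeff (finSuccEquiv K i (C p))) = constantCoeff (C p)
    simp [finSuccEquiv_apply]
  · intro j
    show constantCoeff (Polynomial.constantCoeff (finSuccEquiv K i (X j))) = constantCoeff (X j)
    refine Fin.cases ?_ (fun j => ?_) j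
    · rw [finSuccEquiv_X_zero]; simp
    · rw [finSuccEquiv_X_succ]; simp

variable {R : Type} [CommRing R] {A : Type} [Ring A] [Algebra R A]

lemma down (ε : A →+* K) (i : ℕ) : ∀ (k : ℕ) (g : A →+* MvPolynomial (Fin i) K)
    (hg : Function.Surjective (g.comp (algebraMap R A))) (hε : constantCoeff.comp g = ε)
    (h : NT A (Wr g) (Wr ε) k), ∃ X : ModuleCat.{0} A, Nontrivial (Abelian.Ext.{0} X (ModuleCat.of A (Wr ε)) (k + i)) := by
  induction i with
  | zero =>
    rintro k g hg hε ⟨e, he⟩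
    exact ⟨_, ⟨e, 0, he⟩⟩
  | succ i ih =>
    intro k g hg hε h
    have := ih (k + 1) ((hh i).comp g) ?_ ?_ ?_
    · rwa [show k + (i + 1) = k + 1 + i by ring]
    · rw [RingHom.comp_assoc, RingHom.coe_comp]
      exact (hh_surj i).comp hg
    · rw [← RingHom.comp_assoc, hh_cc, hε]
    · obtain ⟨r, hr⟩ := hg (X 0)
      refine nt_central (Wr ε) (Wr.mul g (X 0)) (Wr.map g (hh i)) ?_ ?_ ?_ k ?_ h
      · exact hh_exact i
      · intro x y hxy
        exact mul_left_cancel₀ (M₀ := MvPolynomial (Fin (i + 1)) K) (X_ne_zero (R := K) (0 : Fin (i + 1))) hxy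
      · exact hh_surj i
      · refine central_zero (Wr g) (Wr ε) r _ ?_ ?_ k
        · intro x
          rw [Wr_smul]
          show (show Wr g from X 0) * x = (show Wr g from (g.comp (algebraMap R A)) r) * x
          rw [hr]
        · intro y
          rw [Wr_smul]
          have : ε (algebraMap R A r) = 0 := by
            rw [← hε]
            show constantCoeff ((g.comp (algebraMap R A)) r) = 0
            rw [hr]; simp
          show (show Wr ε from ε (algebraMap R A r)) * y = 0
          rw [this]
          exact zero_mul y
end Down

section Three
variable {R : Type} [CommRing R] {A : Type} [Ring A] [Algebra R A] (H : PBW R A)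

lemma nt_three_aux {M N : Type} [AddCommGroup M] [Module R M] [Module A M] [IsScalarTower R A M]
    [AddCommGroup N] [Module A N] [Module.Projective R M] (p : M →ₗ[A] N) (m : M) (hm : p m ≠ 0)
    (hu : H.u • m = 0) (hd : H.d • m = 0) (hu' : ∀ y : N, H.u • y = 0) (hd' : ∀ y : N, H.d • y = 0) :
    NT A M N 3 := by
  have hP : Module.Projective A (A ⊗[R] M) := inferInstance
  have h2 : NT A (LinearMap.range (dd2 H M)) N 1 := by
    refine nt_one N (dd3 H M) (dd2 H M).rangeRestrict ?_ (d3_inj H M)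
      (dd2 H M).surjective_rangeRestrict (p ∘ₗ dd0 (R := R) M) ?_
    · intro x
      constructor
      · intro hx
        exact exact2 H M (by simpa [Subtype.ext_iff] using hx)
      · rintro ⟨w, rfl⟩
        exact Subtype.ext (DFunLike.congr_fun (d2d3 H M) w)
    · intro q hq
      have h1 := DFunLike.congr_fun hq (1 ⊗ₜ m)
      have h3 : dd3 H M (1 ⊗ₜ m) = H.u • (-(H.β • (1 : A) ⊗ₜ[R] m), 0) + H.d • (0, (1 : A) ⊗ₜ[R] m) := by
        have h4 : H.u • H.β • (1 : A) ⊗ₜ[R] m = H.β • H.u ⊗ₜ[R] m := by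
          rw [smul_comm, smul_tmul', smul_eq_mul, mul_one]
        simp [dd3, hu, hd, h4, smul_tmul']
      rw [LinearMap.comp_apply, h3, map_add, map_smul, map_smul, hu', hd'] at h1
      simp at h1
      exact hm h1.symm
  have h1 : NT A (LinearMap.range (dd1 H M)) N 2 := by
    refine nt_shift N (LinearMap.range (dd2 H M)).subtype (dd1 H M).rangeRestrict ?_ (injective_subtype _)
      (dd1 H M).surjective_rangeRestrict inferInstance 0 h2
    intro x
    constructor
    · intro hx
      exact ⟨⟨x, exact1 H M (by simpa [Subtype.ext_iff] using hx)⟩, rfl⟩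
    · rintro ⟨⟨_, w, rfl⟩, rfl⟩
      exact Subtype.ext (DFunLike.congr_fun (d1d2 H M) w)
  refine nt_shift N (LinearMap.range (dd1 H M)).subtype (dd0 (R := R) M) ?_ (injective_subtype _)
      (d0_surj M) hP 1 h1
  intro x
  constructor
  · intro hx
    exact ⟨⟨x, exact0 H M hx⟩, rfl⟩
  · rintro ⟨⟨_, w, rfl⟩, rfl⟩
    exact (DFunLike.congr_fun (d0d1 H M) w)

include H in
lemma nt_three (ε : A →ₐ[R] R) (hu : ε H.u = 0) (hd : ε H.d = 0) {S : Type} [CommRing S] [Nontrivial S]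
    (χ : R →+* S) : NT A (Wr (ε : A →+* R)) (Wr (χ.comp (ε : A →+* R))) 3 := by
  letI : Module R (Wr (ε : A →+* R)) := inferInstanceAs (Module R R)
  haveI : IsScalarTower R A (Wr (ε : A →+* R)) := ⟨fun r a m => by
    rw [Wr_smul, Wr_smul]
    show ε (r • a) * (show R from m) = r * (ε a * (show R from m))
    rw [map_smul, smul_eq_mul, mul_assoc]⟩
  haveI : Module.Projective R (Wr (ε : A →+* R)) := inferInstanceAs (Module.Projective R R)
  refine nt_three_aux H (Wr.map (ε : A →+* R) χ) (show R from 1) ?_ ?_ ?_ ?_ ?_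
  · show χ 1 ≠ 0
    rw [map_one]; exact one_ne_zero
  · show ε H.u * 1 = 0
    rw [hu, zero_mul]
  · show ε H.d * 1 = 0
    rw [hd, zero_mul]
  · intro y
    show χ (ε H.u) * (show S from y) = 0
    rw [hu, map_zero, zero_mul]
  · intro y
    show χ (ε H.d) * (show S from y) = 0
    rw [hd, map_zero, zero_mul]
end Three

section Final
open DownUp
variable {K : Type} [Field K] {n : ℕ}

lemma lower_aux {A : Type} [Ring A] [Algebra (MvPolynomial (Fin n) K) A]
    (H : PBW (MvPolynomial (Fin n) K) A) (ε : A →ₐ[MvPolynomial (Fin n) K] MvPolynomial (Fin n) K)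
    (hu : ε H.u = 0) (hd : ε H.d = 0) : (n : ℕ∞) + 3 ≤ globalDim A := by
  have h3 := nt_three H ε hu hd (MvPolynomial.constantCoeff (R := K) (σ := Fin n))
  obtain ⟨X, hX⟩ := down (R := MvPolynomial (Fin n) K)
    (MvPolynomial.constantCoeff.comp (ε : A →+* MvPolynomial (Fin n) K)) n 3 
    (ε : A →+* MvPolynomial (Fin n) K) (fun r => ⟨r, ε.commutes r⟩) rfl h3
  have := le_gd (n + 2) X _ (by rwa [show n + 2 + 1 = 3 + n by ring])
  exact_mod_cast this

variable (α β : K) (φ : MvPolynomial (Fin n) K)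

lemma final_aux : globalDim (A α β φ) = (n : ℕ∞) + 3 := by
  apply le_antisymm
  · exact_mod_cast gd_le (n + 3) (fun M _ _ => pd_A α β φ M)
  · obtain ⟨ε, hu, hd⟩ := liftA α β φ (0 : MvPolynomial (Fin n) K) 0 (by simp) (by simp)
    exact lower_aux (pbwA α β φ) ε hu hd
end Final
end DownUpAux

open DownUp in
/-- The global dimension of the down-up algebra A(α,β,φ) over K[t₁,…,tₙ]
equals n+3, for all α, β, φ. -/
theorem downUp_globalDim {K : Type} [Field K] {n : ℕ}
    (α β : K) (φ : MvPolynomial (Fin n) K) :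
    globalDim (A α β φ) = (n : ℕ∞) + 3 := by
  exact DownUpAux.final_aux α β φ
end

section
/- The down-up algebra A(α,β,φ) over K[t₁,…,tₙ] is a prime ring if and only if not all of α, β, φ are zero. -/
open MvPolynomial

namespace DownUp
open Polynomial

section Span
variable {R A : Type*} [CommRing R] [Ring A] [Algebra R A] (u d : A) (α β φ : R)

/-- The span of the ordered monomials. -/
def W : Submodule R A :=
  Submodule.span R {a | ∃ i j k : ℕ, a = u ^ i * (d * u) ^ j * d ^ k}

lemma mon_mem (i j k : ℕ) : u ^ i * (d * u) ^ j * d ^ k ∈ W (R := R) u d :=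
  Submodule.subset_span ⟨i, j, k, rfl⟩

lemma u_mul_mem {w : A} (hw : w ∈ W (R := R) u d) : u * w ∈ W (R := R) u d := by
  induction hw using Submodule.span_induction with
  | mem x hx =>
    obtain ⟨i, j, k, rfl⟩ := hx
    have := mon_mem (R := R) u d (i+1) j k
    rwa [pow_succ', mul_assoc, mul_assoc, ← mul_assoc (u ^ i)] at this
  | zero => simp
  | add x y _ _ hx hy => rw [mul_add]; exact add_mem hx hy
  | smul r x _ hx => rw [mul_smul_comm]; exact Submodule.smul_mem _ _ hx

lemma mem_mul_d {w : A} (hw : w ∈ W (R := R) u d) : w * d ∈ W (R := R) u d := by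
  induction hw using Submodule.span_induction with
  | mem x hx =>
    obtain ⟨i, j, k, rfl⟩ := hx
    rw [mul_assoc _ _ d, ← pow_succ]
    exact mon_mem u d i j (k+1)
  | zero => simp
  | add x y _ _ hx hy => rw [add_mul]; exact add_mem hx hy
  | smul r x _ hx => rw [smul_mul_assoc]; exact Submodule.smul_mem _ _ hx

lemma u_pow_mul_mem {w : A} (hw : w ∈ W (R := R) u d) (i : ℕ) : u ^ i * w ∈ W (R := R) u d := by
  induction i with
  | zero => simpa
  | succ i ih => rw [pow_succ', mul_assoc]; exact u_mul_mem u d ih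

lemma mem_mul_d_pow {w : A} (hw : w ∈ W (R := R) u d) (i : ℕ) : w * d ^ i ∈ W (R := R) u d := by
  induction i with
  | zero => simpa
  | succ i ih => rw [pow_succ, ← mul_assoc]; exact mem_mul_d u d ih


/-- The image of `d u` under the twisting endomorphism. -/
def z : A := α • (d * u) + β • (u * d) + φ • 1

lemma d_y
    (h1 : d * d * u = α • (d * u * d) + β • (u * d * d) + φ • d)
    : d * (d * u) = z u d α β φ * d := by
  rw [← mul_assoc, h1]; simp [z, add_mul]

lemma y_u
    (h2 : d * u * u = α • (u * d * u) + β • (u * u * d) + φ • u)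
    : (d * u) * u = u * z u d α β φ := by
  rw [h2]; simp [z, mul_add, mul_assoc]

lemma xy_comm
    (h1 : d * d * u = α • (d * u * d) + β • (u * d * d) + φ • d)
    (h2 : d * u * u = α • (u * d * u) + β • (u * u * d) + φ • u)
    : Commute (u * d) (d * u) := by
  have e1 : (u * d) * (d * u) = u * (d * d * u) := by simp only [mul_assoc]
  have e2 : (d * u) * (u * d) = (d * u * u) * d := by simp only [mul_assoc]
  unfold Commute SemiconjBy
  rw [e1, e2, h1, h2]
  simp [mul_add, add_mul, mul_assoc]

lemma d_pow_y
    (h1 : d * d * u = α • (d * u * d) + β • (u * d * d) + φ • d)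
    (a : ℕ) : d * (d * u) ^ a = z u d α β φ ^ a * d := by
  have : SemiconjBy d (d * u) (z u d α β φ) := d_y u d α β φ h1
  exact (this.pow_right a)

lemma d_pow_x (a : ℕ) : d * (u * d) ^ a = (d * u) ^ a * d := by
  have : SemiconjBy d (u * d) (d * u) := by simp [SemiconjBy, mul_assoc]
  exact (this.pow_right a)

lemma yxz_mem
    (h1 : d * d * u = α • (d * u * d) + β • (u * d * d) + φ • d)
    (h2 : d * u * u = α • (u * d * u) + β • (u * u * d) + φ • u)
    (N : ℕ) : ∀ c a b : ℕ, a + b + c = N →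
    (d * u) ^ a * (u * d) ^ b * z u d α β φ ^ c ∈ W (R := R) u d := by
  induction N using Nat.strong_induction_on with
  | _ N IH =>
  intro c
  have hxy := xy_comm u d α β φ h1 h2
  induction c with
  | zero =>
    intro a b hab
    cases b with
    | zero => simpa using mon_mem (R := R) u d 0 a 0
    | succ b =>
      have := IH (b + a) (by omega) a b 0 (by omega)
      have h3 := mem_mul_d u d (u_mul_mem u d this)
      convert h3 using 1
      have e : (d * u) ^ a * (u * d) ^ (b+1) = u * (d * ((u * d) ^ b * (d * u) ^ a)) := by
        rw [← (hxy.pow_pow (b+1) a).eq, pow_succ']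
        simp only [mul_assoc]
      rw [pow_zero, mul_one, e, ← mul_assoc d, d_pow_x, mul_assoc _ d, d_pow_y u d α β φ h1]
      simp only [mul_assoc, pow_zero, one_mul]
  | succ c ihc =>
    intro a b hab
    have e : (d * u) ^ a * (u * d) ^ b * z u d α β φ ^ (c+1)
      = α • ((d * u) ^ (a+1) * (u * d) ^ b * z u d α β φ ^ c)
        + β • ((d * u) ^ a * (u * d) ^ (b+1) * z u d α β φ ^ c)
        + φ • ((d * u) ^ a * (u * d) ^ b * z u d α β φ ^ c) := by
      have hc : (d * u) ^ (a+1) * (u * d) ^ b = (d * u) ^ a * (u * d) ^ b * (d * u) := by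
        rw [pow_succ, mul_assoc _ (d * u), ← (hxy.pow_left b).eq, ← mul_assoc]
      rw [hc, pow_succ' _ c, pow_succ _ b]
      conv_lhs => rw [← mul_assoc]; arg 1; arg 2; rw [z]
      simp only [mul_add, add_mul, mul_smul_comm, smul_mul_assoc, mul_one, mul_assoc]
    rw [e]
    refine add_mem (add_mem ?_ ?_) ?_
    · exact Submodule.smul_mem _ _ (ihc _ _ (by omega))
    · exact Submodule.smul_mem _ _ (ihc _ _ (by omega))
    · exact Submodule.smul_mem _ _ (IH (a+b+c) (by omega) c a b rfl)

/-- The subalgebra generated by `u d` and `d u`. -/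
def P : Subalgebra R A := Algebra.adjoin R {u * d, d * u}

lemma x_mem : u * d ∈ P (R := R) u d := Algebra.subset_adjoin (by simp)
lemma y_mem : d * u ∈ P (R := R) u d := Algebra.subset_adjoin (by simp)

lemma z_mem : z u d α β φ ∈ P (R := R) u d :=
  add_mem (add_mem (Subalgebra.smul_mem _ (y_mem u d) _) (Subalgebra.smul_mem _ (x_mem u d) _))
    (Subalgebra.smul_mem _ (one_mem _) _)

lemma P_le
    (h1 : d * d * u = α • (d * u * d) + β • (u * d * d) + φ • d)
    (h2 : d * u * u = α • (u * d * u) + β • (u * u * d) + φ • u)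
    {p : A} (hp : p ∈ P (R := R) u d) : p ∈ W (R := R) u d := by
  have hxy := xy_comm u d α β φ h1 h2
  have : p ∈ Submodule.span R (Submonoid.closure {u * d, d * u} : Set A) := by
    rw [← Algebra.adjoin_eq_span]; exact hp
  refine (Submodule.span_le.2 ?_) this
  intro m hm
  have : ∃ a b : ℕ, m = (d * u) ^ a * (u * d) ^ b := by
    induction hm using Submonoid.closure_induction_left with
    | one => exact ⟨0, 0, by simp⟩
    | mul_left x hx y _ ih =>
      obtain ⟨a, b, rfl⟩ := ih
      rcases hx with rfl | rfl
      · refine ⟨a, b+1, ?_⟩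
        rw [← mul_assoc, (hxy.pow_right a).eq, mul_assoc, ← pow_succ']
      · refine ⟨a+1, b, ?_⟩
        rw [← mul_assoc, ← pow_succ']
  obtain ⟨a, b, rfl⟩ := this
  simpa using yxz_mem u d α β φ h1 h2 (a+b) 0 a b rfl

lemma P_u
    (h2 : d * u * u = α • (u * d * u) + β • (u * u * d) + φ • u)
    {p : A} (hp : p ∈ P (R := R) u d) : ∃ q ∈ P (R := R) u d, p * u = u * q := by
  induction hp using Algebra.adjoin_induction with
  | mem x hx =>
    rcases hx with rfl | rfl
    · exact ⟨d * u, y_mem u d, by simp only [mul_assoc]⟩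
    · exact ⟨z u d α β φ, z_mem u d α β φ, y_u u d α β φ h2⟩
  | algebraMap r => exact ⟨algebraMap R A r, Subalgebra.algebraMap_mem _ _, Algebra.commutes _ _⟩
  | add x y _ _ hx hy =>
    obtain ⟨q, hq, e⟩ := hx
    obtain ⟨q', hq', e'⟩ := hy
    exact ⟨q + q', add_mem hq hq', by rw [add_mul, mul_add, e, e']⟩
  | mul x y _ _ hx hy =>
    obtain ⟨q, hq, e⟩ := hx
    obtain ⟨q', hq', e'⟩ := hy
    exact ⟨q * q', mul_mem hq hq', by rw [mul_assoc, e', ← mul_assoc, e, mul_assoc]⟩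

lemma P_u_pow
    (h2 : d * u * u = α • (u * d * u) + β • (u * u * d) + φ • u)
    (i : ℕ) {p : A} (hp : p ∈ P (R := R) u d) :
    ∃ q ∈ P (R := R) u d, p * u ^ i = u ^ i * q := by
  induction i with
  | zero => exact ⟨p, hp, by simp⟩
  | succ i ih =>
    obtain ⟨q, hq, e⟩ := ih
    obtain ⟨q', hq', e'⟩ := P_u u d α β φ h2 hq
    exact ⟨q', hq', by rw [pow_succ, ← mul_assoc, e, mul_assoc, e', mul_assoc]⟩

lemma d_mul_mem
    (h1 : d * d * u = α • (d * u * d) + β • (u * d * d) + φ • d)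
    (h2 : d * u * u = α • (u * d * u) + β • (u * u * d) + φ • u)
    {w : A} (hw : w ∈ W (R := R) u d) : d * w ∈ W (R := R) u d := by
  induction hw using Submodule.span_induction with
  | mem x hx =>
    obtain ⟨i, j, k, rfl⟩ := hx
    cases i with
    | zero =>
      rw [pow_zero, one_mul, ← mul_assoc, d_pow_y u d α β φ h1]
      refine mem_mul_d_pow u d (mem_mul_d u d (P_le u d α β φ h1 h2 ?_)) k
      exact pow_mem (z_mem u d α β φ) j
    | succ i =>
      obtain ⟨q, hq, e⟩ := P_u_pow u d α β φ h2 i (y_mem (R := R) u d)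
      have : d * (u ^ (i+1) * (d * u) ^ j * d ^ k) = u ^ i * (q * (d * u) ^ j) * d ^ k := by
        rw [← mul_assoc (u ^ i), ← e, pow_succ']
        simp only [mul_assoc]
      rw [this]
      refine mem_mul_d_pow u d (u_pow_mul_mem u d (P_le u d α β φ h1 h2 ?_) i) k
      exact mul_mem hq (pow_mem (y_mem u d) j)
  | zero => simp
  | add x y _ _ hx hy => rw [mul_add]; exact add_mem hx hy
  | smul r x _ hx => rw [mul_smul_comm]; exact Submodule.smul_mem _ _ hx

lemma all_mem
    (h1 : d * d * u = α • (d * u * d) + β • (u * d * d) + φ • d)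
    (h2 : d * u * u = α • (u * d * u) + β • (u * u * d) + φ • u)
    (hgen : Algebra.adjoin R {u, d} = ⊤) (a : A) : a ∈ W (R := R) u d := by
  have key : ∀ w ∈ W (R := R) u d, a * w ∈ W (R := R) u d := by
    have ha : a ∈ Algebra.adjoin R {u, d} := by rw [hgen]; trivial
    induction ha using Algebra.adjoin_induction with
    | mem x hx =>
      rcases hx with rfl | rfl
      · exact fun w hw => u_mul_mem _ _ hw
      · exact fun w hw => d_mul_mem _ _ α β φ h1 h2 hw
    | algebraMap r =>
      intro w hw
      rw [← Algebra.smul_def]; exact Submodule.smul_mem _ _ hw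
    | add x y _ _ hx hy => intro w hw; rw [add_mul]; exact add_mem (hx w hw) (hy w hw)
    | mul x y _ _ hx hy => intro w hw; rw [mul_assoc]; exact hx _ (hy w hw)
  simpa using key 1 (by simpa using mon_mem (R := R) u d 0 0 0)

/-- Normal form map. -/
noncomputable def Θ : (ℕ × ℕ →₀ R[X]) →ₗ[R] A :=
  Finsupp.lsum R fun ik =>
    (LinearMap.mulRight R (d ^ ik.2)) ∘ₗ (LinearMap.mulLeft R (u ^ ik.1)) ∘ₗ
      (Polynomial.aeval (R := R) (d * u)).toLinearMap

lemma Θ_surj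
    (h1 : d * d * u = α • (d * u * d) + β • (u * d * d) + φ • d)
    (h2 : d * u * u = α • (u * d * u) + β • (u * u * d) + φ • u)
    (hgen : Algebra.adjoin R {u, d} = ⊤) (a : A) : ∃ p, Θ (R := R) u d p = a := by
  have ha := all_mem u d α β φ h1 h2 hgen a
  have : W (R := R) u d ≤ LinearMap.range (Θ (R := R) u d) := by
    refine Submodule.span_le.2 ?_
    rintro _ ⟨i, j, k, rfl⟩
    exact ⟨Finsupp.single (i, k) (Polynomial.X ^ j), by simp [Θ]⟩
  exact this ha

end Span
end DownUp

namespace DownUp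
open Polynomial

section Rep
variable {R : Type*} [CommRing R]

/-- The coefficient ring of the representation. -/
abbrev BB (R : Type*) [CommRing R] := Polynomial (Polynomial R)
/-- The representation space. -/
abbrev VV (R : Type*) [CommRing R] := ℤ →₀ BB R

variable (l μ : ℤ → BB R)

/-- The raising operator. -/
noncomputable def uOp : Module.End (BB R) (VV R) :=
  Finsupp.linearCombination (BB R) fun m => Finsupp.single (m+1) (μ m)
/-- The lowering operator. -/
noncomputable def dOp : Module.End (BB R) (VV R) :=
  Finsupp.linearCombination (BB R) fun m => Finsupp.single (m-1) (l m)

lemma uOp_single (m : ℤ) (f : BB R) :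
    uOp μ (Finsupp.single m f) = Finsupp.single (m+1) (f * μ m) := by
  simp [uOp, Finsupp.linearCombination_single]
lemma dOp_single (m : ℤ) (f : BB R) :
    dOp l (Finsupp.single m f) = Finsupp.single (m-1) (f * l m) := by
  simp [dOp, Finsupp.linearCombination_single]

variable (α β φ : R)

lemma rep_h1 (H1 : ∀ m, μ m * l (m+1) * l m = algebraMap R (BB R) α * (l m * μ (m-1) * l m)
      + algebraMap R (BB R) β * (l m * l (m-1) * μ (m-2)) + algebraMap R (BB R) φ * l m) :
    dOp l * dOp l * uOp μ = α • (dOp l * uOp μ * dOp l) + β • (uOp μ * dOp l * dOp l)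
      + φ • dOp l := by
  refine Finsupp.lhom_ext fun m f => ?_
  have e1 : m + 1 - 1 - 1 = m - 1 := by ring
  have e2 : m - 1 + 1 - 1 = m - 1 := by ring
  have e3 : m - 1 - 1 + 1 = m - 1 := by ring
  have e4 : m - 1 - 1 = m - 2 := by ring
  have e5 : m - 2 + 1 = m - 1 := by ring
  simp only [Module.End.mul_apply, LinearMap.add_apply, LinearMap.smul_apply, uOp_single,
    dOp_single, Finsupp.smul_single, e1, e2, e3, e4, e5, ← Finsupp.single_add,
    add_sub_cancel_right, sub_add_cancel]
  congr 1
  simp only [Algebra.smul_def]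
  linear_combination f * H1 m

lemma rep_h2 (H2 : ∀ m, μ m * μ (m+1) * l (m+2) = algebraMap R (BB R) α * (μ m * l (m+1) * μ m)
      + algebraMap R (BB R) β * (l m * μ (m-1) * μ m) + algebraMap R (BB R) φ * μ m) :
    dOp l * uOp μ * uOp μ = α • (uOp μ * dOp l * uOp μ) + β • (uOp μ * uOp μ * dOp l)
      + φ • uOp μ := by
  refine Finsupp.lhom_ext fun m f => ?_
  have e1 : m + 1 + 1 = m + 2 := by ring
  have e2 : m + 2 - 1 = m + 1 := by ring
  simp only [Module.End.mul_apply, LinearMap.add_apply, LinearMap.smul_apply, uOp_single,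
    dOp_single, Finsupp.smul_single, e1, e2, ← Finsupp.single_add,
    add_sub_cancel_right, sub_add_cancel]
  congr 1
  simp only [Algebra.smul_def]
  linear_combination f * H2 m

/-- Product of the first `k` lowering coefficients. -/
noncomputable def Pi (k : ℕ) : BB R := ∏ i ∈ Finset.range k, l ((i : ℤ) + 1)

lemma dOp_pow_le (k : ℕ) (j : ℕ) (hjk : j ≤ k) : ∃ Q, Pi l j * Q = Pi l k ∧ 
    ∀ f, (dOp l ^ (k - j)) (Finsupp.single (k : ℤ) f) = Finsupp.single (j : ℤ) (f * Q) := by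
  obtain ⟨r, rfl⟩ := Nat.exists_eq_add_of_le hjk
  induction r with
  | zero => exact ⟨1, by simp, by simp⟩
  | succ r ih =>
    obtain ⟨Q, hQ, h⟩ := ih (by omega)
    refine ⟨l (((j + r : ℕ) : ℤ) + 1) * Q, ?_, ?_⟩
    · have e : Pi l (j + (r + 1)) = Pi l (j + r) * l (((j + r : ℕ) : ℤ) + 1) := by
        rw [← add_assoc, Pi, Finset.prod_range_succ, ← Pi]
      rw [e, ← hQ]; ring
    · intro f
      have e : j + (r + 1) - j = (j + r - j) + 1 := by omega
      rw [e, pow_succ, Module.End.mul_apply, dOp_single]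
      have e2 : ((j + (r + 1) : ℕ) : ℤ) - 1 = (j + r : ℕ) := by push_cast; ring
      have e3 : ((j + (r + 1) : ℕ) : ℤ) = (j + r : ℕ) + 1 := by push_cast; ring
      rw [e2, h, e3, mul_assoc]

lemma dOp_pow (k : ℕ) (f : BB R) :
    (dOp l ^ k) (Finsupp.single (k : ℤ) f) = Finsupp.single 0 (f * Pi l k) := by
  obtain ⟨Q, hQ, h⟩ := dOp_pow_le l k 0 (by omega)
  have := h f
  have hQ' : Q = Pi l k := by simpa [Pi] using hQ
  simpa [hQ'] using this

lemma uOp_pow (hμ : ∀ m, 0 ≤ m → μ m = 1) (i : ℕ) (f : BB R) :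
    (uOp μ ^ i) (Finsupp.single 0 f) = Finsupp.single (i : ℤ) f := by
  induction i with
  | zero => simp
  | succ i ih =>
    rw [pow_succ', Module.End.mul_apply, ih, uOp_single, hμ _ (by positivity)]
    simp

lemma du_aeval (hμ : μ 0 = 1) (hl1 : l 1 = Polynomial.C Polynomial.X) (p : R[X]) (f : BB R) :
    (Polynomial.aeval (dOp l * uOp μ) p) (Finsupp.single 0 f) = Finsupp.single 0 (f * Polynomial.C p) := by
  induction p using Polynomial.induction_on' generalizing f with
  | add p q hp hq => simp [hp, hq, mul_add]
  | monomial n a =>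
    have h0 : ∀ f, (dOp l * uOp μ) (Finsupp.single 0 f) = Finsupp.single 0 (f * Polynomial.C Polynomial.X) := by
      intro f
      rw [Module.End.mul_apply, uOp_single, dOp_single, hμ]; simp [hl1]
    have hn : ((dOp l * uOp μ) ^ n) (Finsupp.single 0 f)
        = Finsupp.single 0 (f * Polynomial.C Polynomial.X ^ n) := by
      induction n with
      | zero => simp
      | succ n ih => rw [pow_succ', Module.End.mul_apply, ih, h0, pow_succ, mul_assoc]
    rw [Polynomial.aeval_monomial, Module.End.mul_apply, hn, Module.algebraMap_end_apply,
      Finsupp.smul_single, Algebra.smul_def, ← Polynomial.C_mul_X_pow_eq_monomial]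
    congr 1
    simp only [map_mul, map_pow]
    rw [show algebraMap R (BB R) a = Polynomial.C (Polynomial.C a) from rfl]
    ring

variable {A : Type*} [Ring A] [Algebra R A] (u d : A)
  (ρ : A →ₐ[R] Module.End (BB R) (VV R))

lemma faithful_aux
    (hu : ρ u = uOp μ)
    (hd : ρ d = dOp l)
    [IsDomain R] (hμ : ∀ m, 0 ≤ m → μ m = 1) (hl1 : l 1 = Polynomial.C Polynomial.X)
    (hl0 : (Polynomial.X : BB R) ∣ l 0)
    (hl : ∀ m, 1 ≤ m → l m ≠ 0) (p : ℕ × ℕ →₀ R[X])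
    (h : ∀ k : ℕ, ρ (Θ u d p) (Finsupp.single (k : ℤ) 1) = 0) : p = 0 := by
  have key : ∀ k i, p (i, k) = 0 := by
    intro k
    induction k using Nat.strong_induction_on with
    | _ k IH =>
    have hPi : Pi l k ≠ 0 := Finset.prod_ne_zero_iff.2 fun i _ => hl _ (by omega)
    have hk := h k
    have expand : ρ (Θ u d p) (Finsupp.single (k : ℤ) 1) = 
        ∑ ik ∈ p.support, (uOp μ ^ ik.1) ((Polynomial.aeval (dOp l * uOp μ) (p ik))
          ((dOp l ^ ik.2) (Finsupp.single (k : ℤ) 1))) := by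
      simp only [Θ, Finsupp.lsum_apply, Finsupp.sum, map_sum, LinearMap.sum_apply]
      refine Finset.sum_congr rfl fun ik _ => ?_
      simp [hu, hd, ← Polynomial.aeval_algHom_apply]
    rw [expand] at hk
    intro i
    have hi := congrArg (fun v : VV R => v i) hk
    simp only [Finsupp.finsetSum_apply, Finsupp.zero_apply] at hi
    have hterm : ∀ ik ∈ p.support, ik ≠ (i, k) → (Pi l k * Polynomial.X) ∣
        ((uOp μ ^ ik.1) ((Polynomial.aeval (dOp l * uOp μ) (p ik))
          ((dOp l ^ ik.2) (Finsupp.single (k : ℤ) 1)))) i := by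
      rintro ⟨i', k'⟩ hik hne
      rcases lt_trichotomy k' k with hlt | rfl | hgt
      · exact absurd (IH k' hlt i') (Finsupp.mem_support_iff.1 hik)
      · have : i' ≠ i := fun h => hne (by rw [h])
        simp only
        rw [dOp_pow, du_aeval l μ (hμ 0 le_rfl) hl1, uOp_pow μ hμ, Finsupp.single_apply,
          if_neg (by exact_mod_cast this)]
        exact dvd_zero _
      · obtain ⟨r, rfl⟩ := Nat.exists_eq_add_of_lt hgt
        obtain ⟨c, hc⟩ := hl0
        simp only
        rw [show k + r + 1 = r + 1 + k by omega, pow_add, Module.End.mul_apply, dOp_pow, pow_succ,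
          Module.End.mul_apply, dOp_single, hc]
        have : (Finsupp.single (0 - 1 : ℤ) (1 * Pi l k * (Polynomial.X * c)) : VV R)
          = (Pi l k * Polynomial.X) • Finsupp.single (0 - 1 : ℤ) c := by
          rw [Finsupp.smul_single, smul_eq_mul]; congr 1; ring
        rw [this, map_smul, map_smul, map_smul, Finsupp.smul_apply, smul_eq_mul]
        exact dvd_mul_right _ _
    by_contra hne
    have hmem : (i, k) ∈ p.support := Finsupp.mem_support_iff.2 hne
    rw [← Finset.add_sum_erase _ _ hmem] at hi
    have hdvd := Finset.dvd_sum (s := p.support.erase (i, k)) (fun ik hik =>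
      hterm ik (Finset.mem_of_mem_erase hik) (Finset.ne_of_mem_erase hik))
    obtain ⟨w, hw⟩ := hdvd
    rw [hw] at hi
    simp only at hi
    rw [dOp_pow, du_aeval l μ (hμ 0 le_rfl) hl1, uOp_pow μ hμ, Finsupp.single_eq_same] at hi
    have h3 : Pi l k * (Polynomial.C (p (i, k)) + Polynomial.X * w) = 0 := by rw [← hi]; ring
    have h4 := (mul_eq_zero.1 h3).resolve_left hPi
    have h5 := congrArg (fun q => Polynomial.coeff q 0) h4
    simp at h5
    exact hne h5
  ext1 ⟨i, k⟩
  exact key k i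

lemma faithful
    (hu : ρ u = uOp μ)
    (hd : ρ d = dOp l)
    [IsDomain R] (hμ : ∀ m, 0 ≤ m → μ m = 1) (hl1 : l 1 = Polynomial.C Polynomial.X)
    (hl0 : (Polynomial.X : BB R) ∣ l 0)
    (hl : ∀ m, 1 ≤ m → l m ≠ 0) 
    (h1 : d * d * u = α • (d * u * d) + β • (u * d * d) + φ • d)
    (h2 : d * u * u = α • (u * d * u) + β • (u * u * d) + φ • u)
    (hgen : Algebra.adjoin R {u, d} = ⊤) (a : A) (ha : a ≠ 0) :
    ∃ k : ℕ, ρ a (Finsupp.single (k : ℤ) 1) ≠ 0 := by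
  by_contra! hcon
  obtain ⟨p, rfl⟩ := Θ_surj u d α β φ h1 h2 hgen a
  rw [faithful_aux l μ u d ρ hu hd hμ hl1 hl0 hl p hcon] at ha
  simp at ha

lemma apply_eq_sum (T : Module.End (BB R) (VV R)) (w : VV R) (j : ℤ) :
    T w j = ∑ i ∈ w.support, w i * (T (Finsupp.single i 1)) j := by
  conv_lhs => rw [← Finsupp.sum_single w, Finsupp.sum, map_sum, Finsupp.finsetSum_apply]
  refine Finset.sum_congr rfl fun i _ => ?_
  have : (Finsupp.single i (w i) : VV R) = w i • Finsupp.single i 1 := by simp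
  rw [this, map_smul, Finsupp.smul_apply, smul_eq_mul]

/-- Case `β = 0`. -/
lemma prime_verma [IsDomain R] (hμ : ∀ m, 0 ≤ m → μ m = 1) 
    (hl0 : l 0 = 0) (hl : ∀ m, 1 ≤ m → l m ≠ 0) 
    (hu : ρ u = uOp μ) (hd : ρ d = dOp l)
    (hgen : Algebra.adjoin R {u, d} = ⊤)
    (hf : ∀ a, a ≠ 0 → ∃ k : ℕ, ρ a (Finsupp.single (k : ℤ) 1) ≠ 0)
    (a b : A) (hab : ∀ x, a * x * b = 0) : a = 0 ∨ b = 0 := by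
  by_contra! hcon
  obtain ⟨ha, hb⟩ := hcon
  obtain ⟨k, hk⟩ := hf a ha
  obtain ⟨m, hm⟩ := hf b hb
  -- invariance of the nonnegative part
  have inv : ∀ c : A, ∀ w ∈ Finsupp.supported (BB R) (BB R) {j : ℤ | 0 ≤ j},
      ρ c w ∈ Finsupp.supported (BB R) (BB R) {j : ℤ | 0 ≤ j} := by
    intro c
    have hc : c ∈ Algebra.adjoin R {u, d} := by rw [hgen]; trivial
    have hsing : ∀ T : Module.End (BB R) (VV R),
        (∀ j : ℤ, 0 ≤ j → T (Finsupp.single j 1) ∈ Finsupp.supported (BB R) (BB R) {j : ℤ | 0 ≤ j}) →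
        ∀ w ∈ Finsupp.supported (BB R) (BB R) {j : ℤ | 0 ≤ j},
          T w ∈ Finsupp.supported (BB R) (BB R) {j : ℤ | 0 ≤ j} := by
      intro T hT w hw
      rw [← Finsupp.sum_single w, Finsupp.sum, map_sum]
      refine Submodule.sum_mem _ fun i hi => ?_
      have : (Finsupp.single i (w i) : VV R) = w i • Finsupp.single i 1 := by simp
      rw [this, map_smul]
      exact Submodule.smul_mem _ _ (hT i ((Finsupp.mem_supported _ _).1 hw hi))
    induction hc using Algebra.adjoin_induction with
    | mem x hx =>
      rcases hx with rfl | rfl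
      · rw [hu]
        refine hsing _ fun j hj => ?_
        rw [uOp_single]
        exact Finsupp.single_mem_supported _ _ (by simp; omega)
      · rw [hd]
        refine hsing _ fun j hj => ?_
        rw [dOp_single]
        rcases hj.eq_or_lt with rfl | hj
        · simp [hl0]
        · exact Finsupp.single_mem_supported _ _ (by simp; omega)
    | algebraMap r =>
      intro w hw
      rw [AlgHom.commutes, Module.algebraMap_end_apply, ← algebraMap_smul (BB R)]
      exact Submodule.smul_mem _ _ hw
    | add x y _ _ hx hy =>
      intro w hw
      rw [map_add, LinearMap.add_apply]; exact add_mem (hx w hw) (hy w hw)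
    | mul x y _ _ hx hy =>
      intro w hw
      rw [map_mul, Module.End.mul_apply]; exact hx _ (hy w hw)
  set w := ρ b (Finsupp.single (m : ℤ) 1) with hwdef
  have hw : ∀ i ∈ w.support, 0 ≤ i := fun i hi => (Finsupp.mem_supported _ _).1
    (inv b _ (Finsupp.single_mem_supported _ _ (by simp))) hi
  have hne : w.support.Nonempty := Finsupp.support_nonempty_iff.2 hm
  obtain ⟨N, hN⟩ : ∃ N : ℕ, (N : ℤ) = w.support.max' hne :=
    ⟨_, Int.toNat_of_nonneg (hw _ (Finset.max'_mem _ _))⟩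
  have hNm : (N : ℤ) ∈ w.support := hN ▸ Finset.max'_mem _ _
  have hNle : ∀ i ∈ w.support, i ≤ N := fun i hi => hN ▸ Finset.le_max' _ _ hi
  have hd0 : ∀ r : ℕ, (dOp l ^ (r+1)) (Finsupp.single (0:ℤ) 1 : VV R) = 0 := by
    intro r
    rw [pow_succ, Module.End.mul_apply, dOp_single, hl0]; simp
  have hdw : (dOp l ^ N) w = Finsupp.single 0 (w N * Pi l N) := by
    conv_lhs => rw [← Finsupp.sum_single w, Finsupp.sum, map_sum]
    rw [Finset.sum_eq_single (N : ℤ), dOp_pow]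
    · intro i hi hiN
      obtain ⟨i, rfl⟩ := Int.eq_ofNat_of_zero_le (hw i hi)
      have h1 := hNle _ hi
      have : i < N := by omega
      obtain ⟨r, rfl⟩ := Nat.exists_eq_add_of_lt this
      rw [show i + r + 1 = r + 1 + i by omega, pow_add, Module.End.mul_apply, dOp_pow]
      have e : ∀ f : BB R, (Finsupp.single (0:ℤ) f : VV R) = f • Finsupp.single 0 1 := by simp
      rw [e, map_smul, hd0, smul_zero]
    · intro h; exact absurd hNm h
  have hPi : Pi l N ≠ 0 := Finset.prod_ne_zero_iff.2 fun i _ => hl _ (by omega)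
  have h := congrArg (fun c => ρ c (Finsupp.single (m : ℤ) 1)) (hab (u ^ k * d ^ N))
  simp only [map_mul, map_pow, Module.End.mul_apply, hu, hd, ← hwdef, hdw, map_zero,
    LinearMap.zero_apply] at h
  rw [uOp_pow μ hμ] at h
  have e : (Finsupp.single (k:ℤ) (w N * Pi l N) : VV R) = (w N * Pi l N) • Finsupp.single (k:ℤ) 1 := by
    simp
  rw [e, map_smul, smul_eq_zero] at h
  rcases h with h | h
  · exact mul_ne_zero (Finsupp.mem_support_iff.1 hNm) hPi h
  · exact hk h

/-- Case `β` invertible. -/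
lemma domain_shift [IsDomain R] (σ : BB R ≃ₐ[R] BB R) (hμ : ∀ m, μ m = 1)
    (hσ : ∀ m, l (m+1) = σ (l m)) 
    (hu : ρ u = uOp μ) (hd : ρ d = dOp l)
    (hgen : Algebra.adjoin R {u, d} = ⊤)
    (hf : ∀ a, a ≠ 0 → ∃ k : ℕ, ρ a (Finsupp.single (k : ℤ) 1) ≠ 0)
    (a b : A) (hab : a * b = 0) : a = 0 ∨ b = 0 := by
  let S : VV R →+ VV R := (Finsupp.mapDomain.addMonoidHom (fun j : ℤ => j + 1)).comp
    (Finsupp.mapRange.addMonoidHom (σ : BB R →+ BB R))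
  have hS : ∀ j f, S (Finsupp.single j f) = Finsupp.single (j+1) (σ f) := by
    intro j f
    simp [S, Finsupp.mapDomain_single]
  have hSr : ∀ (r : R) w, S (r • w) = r • S w := by
    intro r w
    induction w using Finsupp.induction_linear with
    | zero => simp
    | add f g hf hg => rw [smul_add, map_add, hf, hg, map_add, smul_add]
    | single j f => rw [Finsupp.smul_single, hS, hS, Finsupp.smul_single, map_smul]
  have hScoe : ∀ w j, (S w) (j+1) = σ (w j) := by
    intro w j
    have : (S w) (j+1) = (Finsupp.mapRange.addMonoidHom (σ : BB R →+ BB R) w) j :=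
      Finsupp.mapDomain_apply (add_left_injective (1:ℤ)) _ _
    rw [this]; simp
  have comm : ∀ c : A, ∀ w, ρ c (S w) = S (ρ c w) := by
    intro c
    have hc : c ∈ Algebra.adjoin R {u, d} := by rw [hgen]; trivial
    induction hc using Algebra.adjoin_induction with
    | mem x hx =>
      intro w
      induction w using Finsupp.induction_linear with
      | zero => simp
      | add f g hf hg => rw [map_add, map_add, hf, hg, map_add, map_add]
      | single j f =>
        rcases hx with rfl | rfl
        · rw [hu, hS, uOp_single, uOp_single, hS, hμ, hμ]; simp
        · rw [hd, hS, dOp_single, dOp_single, hS, hσ]; simp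
    | algebraMap r =>
      intro w
      rw [AlgHom.commutes, Module.algebraMap_end_apply, Module.algebraMap_end_apply, hSr]
    | add x y _ _ hx hy => intro w; simp [hx, hy]
    | mul x y _ _ hx hy => intro w; simp [hx, hy]
  have step : ∀ (c : A) (m j : ℤ), ρ c (Finsupp.single (m+1) 1) (j+1)
      = σ (ρ c (Finsupp.single m 1) j) := by
    intro c m j
    rw [← hScoe, ← comm, hS, map_one]
  have step' : ∀ (c : A) (m j : ℤ), ρ c (Finsupp.single m 1) (j+m) = 0 ↔
      ρ c (Finsupp.single 0 1) j = 0 := by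
    intro c m j
    induction m using Int.induction_on with
    | zero => simp
    | succ i ih =>
      rw [← add_assoc, step, ← ih]; simp
    | pred i ih =>
      rw [← ih]
      have := step c (-i-1) (j + (-i-1))
      rw [show j + (-(i:ℤ)-1) + 1 = j + -i by ring, show -(i:ℤ)-1+1 = -i by ring] at this
      rw [this]; simp
  by_contra! hcon
  obtain ⟨ha, hb⟩ := hcon
  have hf' : ∀ c, c ≠ 0 → ρ c (Finsupp.single 0 1) ≠ 0 := by
    intro c hc h0
    obtain ⟨k, hk⟩ := hf c hc
    apply hk
    ext1 j
    have := (step' c k (j - k)).2 (by rw [h0]; rfl)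
    rwa [sub_add_cancel] at this
  have top : ∀ w : VV R, w ≠ 0 → ∃ N, w N ≠ 0 ∧ ∀ j, N < j → w j = 0 := by
    intro w hw
    have hne : w.support.Nonempty := Finsupp.support_nonempty_iff.2 hw
    refine ⟨w.support.max' hne, Finsupp.mem_support_iff.1 (Finset.max'_mem _ _), fun j hj => ?_⟩
    by_contra h
    exact absurd (Finset.le_max' _ _ (Finsupp.mem_support_iff.2 h)) (not_le.2 hj)
  obtain ⟨J, hJ, hJ'⟩ := top _ (hf' a ha)
  obtain ⟨N, hN, hN'⟩ := top _ (hf' b hb)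
  have h := congrArg (fun c => ρ c (Finsupp.single 0 1) (J + N)) hab
  simp only [map_mul, Module.End.mul_apply, map_zero, LinearMap.zero_apply,
    Finsupp.zero_apply] at h
  rw [apply_eq_sum, Finset.sum_eq_single N] at h
  · rcases mul_eq_zero.1 h with h | h
    · exact hN h
    · exact hJ ((step' a N J).1 h)
  · intro i hi hiN
    have : i ≤ N := by
      by_contra hlt
      exact (Finsupp.mem_support_iff.1 hi) (hN' i (not_le.1 hlt))
    have h0 := (step' a i (J + N - i)).2 (hJ' _ (by omega))
    rw [sub_add_cancel] at h0
    rw [h0, mul_zero]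
  · intro h; rw [Finsupp.notMem_support_iff.1 h, zero_mul]

end Rep
end DownUp

namespace DownUp
universe v
section Inst
variable {R : Type v} [CommRing R]

/-- Substitution endomorphism of the coefficient ring. -/
noncomputable def sub2 (p q : BB R) : BB R →ₐ[R] BB R where
  __ := Polynomial.eval₂RingHom (Polynomial.aeval (R := R) q).toRingHom p
  commutes' r := by
    change Polynomial.eval₂ _ p (Polynomial.C (Polynomial.C r)) = _
    simp

lemma sub2_X (p q : BB R) : sub2 p q Polynomial.X = p := by
  change Polynomial.eval₂ _ p _ = _
  simp
lemma sub2_Y (p q : BB R) : sub2 p q (Polynomial.C Polynomial.X) = q := by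
  change Polynomial.eval₂ _ p _ = _
  simp

lemma BB_ext (f g : BB R →ₐ[R] BB R) (h1 : f Polynomial.X = g Polynomial.X)
    (h2 : f (Polynomial.C Polynomial.X) = g (Polynomial.C Polynomial.X)) : f = g := by
  have : (f : BB R →+* BB R) = g := by
    refine Polynomial.ringHom_ext' (Polynomial.ringHom_ext' ?_ ?_) ?_
    · ext r
      have e : Polynomial.C (Polynomial.C r) = algebraMap R (BB R) r := rfl
      simp only [RingHom.comp_apply, RingHom.coe_coe]
      rw [e, AlgHom.commutes, AlgHom.commutes]
    · simpa using h2
    · simpa using h1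
  refine AlgHom.ext fun x => ?_
  exact congrArg (fun F : BB R →+* BB R => F x) this

/-- The twisting automorphism. -/
noncomputable def sg (α β γ φ : R) (h : β * γ = 1) : BB R ≃ₐ[R] BB R :=
  AlgEquiv.ofAlgHom
    (sub2 (Polynomial.C Polynomial.X) (algebraMap R _ α * Polynomial.C Polynomial.X
      + algebraMap R _ β * Polynomial.X + algebraMap R _ φ))
    (sub2 (algebraMap R _ γ * (Polynomial.C Polynomial.X - algebraMap R _ α * Polynomial.X
      - algebraMap R _ φ)) Polynomial.X)
    (by
      have h' : algebraMap R (BB R) β * algebraMap R (BB R) γ = 1 := by rw [← map_mul, h, map_one]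
      apply BB_ext
      · simp only [AlgHom.comp_apply, sub2_X, sub2_Y, map_mul, map_sub, map_add, AlgHom.commutes,
          AlgHom.id_apply]
        linear_combination Polynomial.X * h'
      · simp only [AlgHom.comp_apply, sub2_X, sub2_Y, AlgHom.id_apply])
    (by
      have h' : algebraMap R (BB R) β * algebraMap R (BB R) γ = 1 := by rw [← map_mul, h, map_one]
      apply BB_ext
      · simp only [AlgHom.comp_apply, sub2_X, sub2_Y, AlgHom.id_apply]
      · simp only [AlgHom.comp_apply, sub2_X, sub2_Y, map_mul, map_sub, map_add, AlgHom.commutes,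
          AlgHom.id_apply]
        linear_combination (Polynomial.C Polynomial.X - algebraMap R _ α * Polynomial.X
          - algebraMap R _ φ) * h')

variable {A : Type*} [Ring A] [Algebra R A] (u d : A) (α β φ : R)

theorem prime_unit [IsDomain R] (γ : R) (hβ : β * γ = 1)
    (h1 : d * d * u = α • (d * u * d) + β • (u * d * d) + φ • d)
    (h2 : d * u * u = α • (u * d * u) + β • (u * u * d) + φ • u)
    (hgen : Algebra.adjoin R {u, d} = ⊤)
    (univ : ∀ (E : Type v) [Semiring E] [Algebra R E] (u' d' : E),
      d' * d' * u' = α • (d' * u' * d') + β • (u' * d' * d') + φ • d' →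
      d' * u' * u' = α • (u' * d' * u') + β • (u' * u' * d') + φ • u' →
      ∃ ρ : A →ₐ[R] E, ρ u = u' ∧ ρ d = d')
    (a b : A) (hab : ∀ x, a * x * b = 0) : a = 0 ∨ b = 0 := by
  let σ := sg α β γ φ hβ
  have hX : σ Polynomial.X = Polynomial.C Polynomial.X := sub2_X _ _
  have hY : σ (Polynomial.C Polynomial.X) = algebraMap R _ α * Polynomial.C Polynomial.X
      + algebraMap R _ β * Polynomial.X + algebraMap R _ φ := sub2_Y _ _
  let l : ℤ → BB R := fun m => (σ ^ m) Polynomial.X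
  let μ : ℤ → BB R := fun _ => 1
  have hl : ∀ m, l (m+1) = σ (l m) := by
    intro m
    simp only [l]
    rw [add_comm, zpow_add, zpow_one, AlgEquiv.mul_apply]
  have hl0 : l 0 = Polynomial.X := by simp [l]
  have hl1 : l 1 = Polynomial.C Polynomial.X := by simp [l, hX]
  have hrec : ∀ m, l (m+2) = algebraMap R _ α * l (m+1) + algebraMap R _ β * l m
      + algebraMap R _ φ := by
    intro m
    have e1 : l (m+1) = (σ ^ m) (Polynomial.C Polynomial.X) := by
      simp only [l]; rw [zpow_add, zpow_one, AlgEquiv.mul_apply, hX]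
    have e2 : l (m+2) = (σ ^ m) (σ (σ Polynomial.X)) := by
      simp only [l]; rw [zpow_add, AlgEquiv.mul_apply]; rfl
    rw [e2, e1, hX, hY]
    simp only [map_add, map_mul, AlgEquiv.commutes, l]
  have hne : ∀ m, l m ≠ 0 := by
    intro m
    simp only [l]
    rw [Ne, map_eq_zero_iff _ (σ ^ m).injective]
    exact Polynomial.X_ne_zero
  obtain ⟨ρ, hu, hd⟩ := univ _ (uOp μ) (dOp l)
    (rep_h1 l μ α β φ fun m => by
      have := hrec (m-1)
      rw [show m - 1 + 2 = m + 1 by ring, sub_add_cancel] at this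
      rw [this]; ring)
    (rep_h2 l μ α β φ fun m => by rw [hrec m]; ring)
  refine domain_shift l μ u d ρ σ (fun _ => rfl) hl hu hd hgen ?_ a b (by simpa using hab 1)
  intro a ha
  exact faithful l μ α β φ u d ρ hu hd (fun _ _ => rfl) hl1 (by rw [hl0]) (fun m _ => hne m)
    h1 h2 hgen a ha

/-- Weights of the Verma module for `β = 0`. -/
noncomputable def sq (α φ : R) : ℕ → BB R
  | 0 => Polynomial.C Polynomial.X
  | n+1 => algebraMap R _ α * sq α φ n + algebraMap R _ φ

lemma sq_ne [IsDomain R] (h : α ≠ 0 ∨ φ ≠ 0) (n : ℕ) : sq α φ n ≠ 0 := by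
  have hinj : Function.Injective (algebraMap R (BB R)) := FaithfulSMul.algebraMap_injective R (BB R)
  by_cases hα : α = 0
  · cases n with
    | zero => simp [sq]
    | succ n =>
      have hφ := h.resolve_left (by simpa using hα)
      rw [sq, hα, map_zero, zero_mul, zero_add, Ne, map_eq_zero_iff _ hinj]
      exact hφ
  · have : ∃ q : Polynomial R, sq α φ n = Polynomial.C q ∧ q.coeff 1 = α ^ n := by
      induction n with
      | zero => exact ⟨Polynomial.X, rfl, by simp⟩
      | succ n ih =>
        obtain ⟨q, hq, hc⟩ := ih
        refine ⟨Polynomial.C α * q + Polynomial.C φ, ?_, ?_⟩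
        · rw [sq, hq, map_add, map_mul]; rfl
        · simp [hc, pow_succ', Polynomial.coeff_C]
    obtain ⟨q, hq, hc⟩ := this
    rw [hq, Ne, Polynomial.C_eq_zero]
    rintro rfl
    simp at hc
    exact pow_ne_zero n hα hc.symm

end Inst
end DownUp

namespace DownUp
universe v
section Inst2
variable {R : Type v} [CommRing R]
variable {A : Type*} [Ring A] [Algebra R A] (u d : A) (α β φ : R)

theorem prime_zero [IsDomain R] (hβ : β = 0) (hne : α ≠ 0 ∨ φ ≠ 0)
    (h1 : d * d * u = α • (d * u * d) + β • (u * d * d) + φ • d)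
    (h2 : d * u * u = α • (u * d * u) + β • (u * u * d) + φ • u)
    (hgen : Algebra.adjoin R {u, d} = ⊤)
    (univ : ∀ (E : Type v) [Semiring E] [Algebra R E] (u' d' : E),
      d' * d' * u' = α • (d' * u' * d') + β • (u' * d' * d') + φ • d' →
      d' * u' * u' = α • (u' * d' * u') + β • (u' * u' * d') + φ • u' →
      ∃ ρ : A →ₐ[R] E, ρ u = u' ∧ ρ d = d')
    (a b : A) (hab : ∀ x, a * x * b = 0) : a = 0 ∨ b = 0 := by
  let l : ℤ → BB R := fun m => if m ≤ 0 then 0 else sq α φ (m-1).toNat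
  let μ : ℤ → BB R := fun m => if 0 ≤ m then 1 else 0
  have hl0 : ∀ m, m ≤ 0 → l m = 0 := fun m hm => if_pos hm
  have hls : ∀ m : ℕ, l (m + 1) = sq α φ m := by
    intro m
    simp only [l]
    rw [if_neg (by omega)]; simp
  have hμ : ∀ m, 0 ≤ m → μ m = 1 := fun m hm => if_pos hm
  have hμ0 : ∀ m, m < 0 → μ m = 0 := fun m hm => if_neg (by omega)
  have hrec : ∀ m, 1 ≤ m → l (m+1) = algebraMap R _ α * l m + algebraMap R _ φ := by
    intro m hm
    obtain ⟨k, rfl⟩ : ∃ k : ℕ, m = k + 1 := ⟨(m-1).toNat, by omega⟩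
    have := hls (k+1)
    push_cast at this
    rw [this, hls, sq]
  obtain ⟨ρ, hu, hd⟩ := univ _ (uOp μ) (dOp l)
    (rep_h1 l μ α β φ fun m => by
      rcases le_or_gt m 0 with hm | hm
      · rw [hl0 m hm]; ring
      · rw [hrec m (by omega), hμ m (by omega), hμ (m-1) (by omega), hβ, map_zero]; ring)
    (rep_h2 l μ α β φ fun m => by
      rcases lt_or_ge m 0 with hm | hm
      · rw [hμ0 m hm]; ring
      · have := hrec (m+1) (by omega)
        rw [show m + 1 + 1 = m + 2 by ring] at this
        rw [this, hμ m (by omega), hμ (m+1) (by omega), hβ, map_zero]; ring)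
  have hl : ∀ m, 1 ≤ m → l m ≠ 0 := by
    intro m hm
    obtain ⟨k, rfl⟩ : ∃ k : ℕ, m = k + 1 := ⟨(m-1).toNat, by omega⟩
    rw [hls]
    exact sq_ne α φ hne k
  refine prime_verma l μ u d ρ hμ (hl0 0 le_rfl) hl hu hd hgen ?_ a b hab
  intro a ha
  exact faithful l μ α β φ u d ρ hu hd hμ (by simpa [sq] using hls 0)
    (by rw [hl0 0 le_rfl]; exact dvd_zero _) hl h1 h2 hgen a ha

end Inst2

section Final
variable {K : Type} [Field K] {n : ℕ} (α β : K) (φ : MvPolynomial (Fin n) K)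

/-- Generator `u` as seen over the base ring. -/
noncomputable def qu : A α β φ := RingQuot.mkAlgHom (MvPolynomial (Fin n) K) (Rel α β φ) uF
/-- Generator `d` as seen over the base ring. -/
noncomputable def qd : A α β φ := RingQuot.mkAlgHom (MvPolynomial (Fin n) K) (Rel α β φ) dF

lemma smul_C (x : F K n) : α • x = (MvPolynomial.C α : MvPolynomial (Fin n) K) • x := by
  rw [← MvPolynomial.algebraMap_eq, algebraMap_smul]

lemma q_h1 : qd α β φ * qd α β φ * qu α β φ =
    (MvPolynomial.C α : MvPolynomial (Fin n) K) • (qd α β φ * qu α β φ * qd α β φ)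
    + (MvPolynomial.C β : MvPolynomial (Fin n) K) • (qu α β φ * qd α β φ * qd α β φ)
    + φ • qd α β φ := by
  have := RingQuot.mkAlgHom_rel (MvPolynomial (Fin n) K) (Rel.ddu (α := α) (β := β) (φ := φ))
  rw [smul_C, smul_C, ← Algebra.smul_def] at this
  simp only [map_mul, map_add, map_smul] at this
  exact this

lemma q_h2 : qd α β φ * qu α β φ * qu α β φ =
    (MvPolynomial.C α : MvPolynomial (Fin n) K) • (qu α β φ * qd α β φ * qu α β φ)
    + (MvPolynomial.C β : MvPolynomial (Fin n) K) • (qu α β φ * qu α β φ * qd α β φ)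
    + φ • qu α β φ := by
  have := RingQuot.mkAlgHom_rel (MvPolynomial (Fin n) K) (Rel.duu (α := α) (β := β) (φ := φ))
  rw [smul_C, smul_C, ← Algebra.commutes, ← Algebra.smul_def] at this
  simp only [map_mul, map_add, map_smul] at this
  exact this

lemma q_gen : Algebra.adjoin (MvPolynomial (Fin n) K) {qu α β φ, qd α β φ} = ⊤ := by
  rw [eq_top_iff]
  rintro a -
  obtain ⟨x, rfl⟩ := RingQuot.mkAlgHom_surjective (MvPolynomial (Fin n) K) (Rel α β φ) a
  induction x using FreeAlgebra.induction with
  | grade0 r => rw [AlgHom.commutes]; exact Subalgebra.algebraMap_mem _ _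
  | grade1 x =>
    apply Algebra.subset_adjoin
    cases x
    · left; rfl
    · right; rfl
  | mul a b ha hb => rw [map_mul]; exact mul_mem ha hb
  | add a b ha hb => rw [map_add]; exact add_mem ha hb

lemma q_univ {E : Type*} [Semiring E] [Algebra (MvPolynomial (Fin n) K) E] (u' d' : E)
    (h1 : d' * d' * u' = (MvPolynomial.C α : MvPolynomial (Fin n) K) • (d' * u' * d')
      + (MvPolynomial.C β : MvPolynomial (Fin n) K) • (u' * d' * d') + φ • d')
    (h2 : d' * u' * u' = (MvPolynomial.C α : MvPolynomial (Fin n) K) • (u' * d' * u')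
      + (MvPolynomial.C β : MvPolynomial (Fin n) K) • (u' * u' * d') + φ • u') :
    ∃ ρ : A α β φ →ₐ[MvPolynomial (Fin n) K] E, ρ (qu α β φ) = u' ∧ ρ (qd α β φ) = d' := by
  let f : F K n →ₐ[MvPolynomial (Fin n) K] E :=
    FreeAlgebra.lift _ (fun g => match g with | Gen.u => u' | Gen.d => d')
  have fu : f uF = u' := FreeAlgebra.lift_ι_apply _ _
  have fd : f dF = d' := FreeAlgebra.lift_ι_apply _ _
  have hf : ∀ ⦃x y⦄, Rel α β φ x y → f x = f y := by
    intro x y hxy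
    cases hxy with
    | ddu =>
      rw [smul_C, smul_C, ← Algebra.smul_def]
      simpa only [map_mul, map_add, map_smul, fu, fd] using h1
    | duu =>
      rw [smul_C, smul_C, ← Algebra.commutes, ← Algebra.smul_def]
      simpa only [map_mul, map_add, map_smul, fu, fd] using h2
  refine ⟨RingQuot.liftAlgHom _ ⟨f, hf⟩, ?_, ?_⟩
  · rw [qu, RingQuot.liftAlgHom_mkAlgHom_apply, fu]
  · rw [qd, RingQuot.liftAlgHom_mkAlgHom_apply, fd]

lemma not_prime (hα : α = 0) (hβ : β = 0) (hφ : φ = 0) :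
    ∃ a b : A α β φ, (∀ x, a * x * b = 0) ∧ a ≠ 0 ∧ b ≠ 0 := by
  have h1 : qd α β φ * qd α β φ * qu α β φ = 0 := by
    rw [q_h1]; subst hα hβ hφ; simp
  refine ⟨qd α β φ * qd α β φ, qu α β φ, ?_, ?_, ?_⟩
  · have key : ∀ x : A α β φ, ∀ k : ℕ, ∀ w : A α β φ,
        (∀ k : ℕ, qd α β φ * qd α β φ * qd α β φ ^ k * w = 0) →
          qd α β φ * qd α β φ * qd α β φ ^ k * (x * w) = 0 := by
      intro x
      have hx : x ∈ Algebra.adjoin (MvPolynomial (Fin n) K) {qu α β φ, qd α β φ} := by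
        rw [q_gen]; trivial
      have hk0 : ∀ k : ℕ, qd α β φ * qd α β φ * qd α β φ ^ k * qu α β φ = 0 := by
        intro k
        have : qd α β φ * qd α β φ * qd α β φ ^ k = qd α β φ ^ k * (qd α β φ * qd α β φ) := by
          rw [← pow_two, ← pow_add, ← pow_add, add_comm]
        rw [this, mul_assoc, h1, mul_zero]
      induction hx using Algebra.adjoin_induction with
      | mem x hx =>
        intro k w hw
        rcases hx with rfl | rfl
        · rw [← mul_assoc, hk0, zero_mul]
        · rw [← mul_assoc, mul_assoc _ _ (qd α β φ), ← pow_succ, hw]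
      | algebraMap r =>
        intro k w hw
        rw [← Algebra.smul_def, mul_smul_comm, hw, smul_zero]
      | add x y _ _ hx hy =>
        intro k w hw
        rw [add_mul, mul_add, hx k w hw, hy k w hw, add_zero]
      | mul x y _ _ hx hy =>
        intro k w hw
        rw [mul_assoc x y w]
        exact hx k _ fun k' => hy k' w hw
    intro x
    have hk0 : ∀ k : ℕ, qd α β φ * qd α β φ * qd α β φ ^ k * qu α β φ = 0 := by
      intro k
      have : qd α β φ * qd α β φ * qd α β φ ^ k = qd α β φ ^ k * (qd α β φ * qd α β φ) := by
        rw [← pow_two, ← pow_add, ← pow_add, add_comm]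
      rw [this, mul_assoc, h1, mul_zero]
    have := key x 0 (qu α β φ) hk0
    rw [pow_zero, mul_one] at this
    rw [mul_assoc _ x]; exact this
  · obtain ⟨ρ, hu, hd⟩ := q_univ α β φ (E := MvPolynomial (Fin n) K) 0 1
      (by subst hα hβ hφ; simp) (by subst hα hβ hφ; simp)
    intro h
    have := congrArg ρ h
    rw [map_mul, hd, map_zero] at this
    simp at this
  · obtain ⟨ρ, hu, hd⟩ := q_univ α β φ (E := MvPolynomial (Fin n) K) 1 0
      (by subst hα hβ hφ; simp) (by subst hα hβ hφ; simp)
    intro h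
    have := congrArg ρ h
    rw [hu, map_zero] at this
    simp at this

end Final
end DownUp

open DownUp in
/-- The down-up algebra A(α,β,φ) over K[t₁,…,tₙ] is a prime ring (in the
elementwise formulation: aAb = 0 implies a = 0 or b = 0) if and only if not
all of α, β, φ are zero. -/
theorem downUp_prime_iff {K : Type} [Field K] {n : ℕ}
    (α β : K) (φ : MvPolynomial (Fin n) K) :
    (∀ a b : A α β φ, (∀ x : A α β φ, a * x * b = 0) → a = 0 ∨ b = 0) ↔
      ¬(α = 0 ∧ β = 0 ∧ φ = 0) := by
  constructor
  · rintro h ⟨hα, hβ, hφ⟩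
    obtain ⟨a, b, hab, ha, hb⟩ := not_prime α β φ hα hβ hφ
    rcases h a b hab with h | h
    · exact ha h
    · exact hb h
  · intro hne a b hab
    by_cases hβ : β = 0
    · refine prime_zero (qu α β φ) (qd α β φ) (MvPolynomial.C α) (MvPolynomial.C β) φ
        (by simp [hβ]) ?_ (q_h1 α β φ) (q_h2 α β φ) (q_gen α β φ)
        (fun E _ _ u' d' h1 h2 => q_univ α β φ u' d' h1 h2) a b hab
      by_contra! hcon
      exact hne ⟨by simpa using hcon.1, hβ, hcon.2⟩
    · exact prime_unit (qu α β φ) (qd α β φ) (MvPolynomial.C α) (MvPolynomial.C β) φ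
        (MvPolynomial.C β⁻¹) (by rw [← MvPolynomial.C_mul, mul_inv_cancel₀ hβ, MvPolynomial.C_1])
        (q_h1 α β φ) (q_h2 α β φ) (q_gen α β φ)
        (fun E _ _ u' d' h1 h2 => q_univ α β φ u' d' h1 h2) a b hab
end
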